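/- arXiv:2001.01607 — 2 statements merged into one kernel-verified Lean document; each statement's English description precedes it below -/
import Mathlib

section
/- If G is a (theta, triangle, cube)-free graph, then G belongs to the class 𝒞, i.e., G is (theta, prism, pyramid, butterfly)-free and every 2-wheel in G with non-adjacent centers is either a nested wheel or a cousin wheel. -/
open SimpleGraph

variable {V : Type} [Fintype V] [DecidableEq V]

/-- `p` is a chordless (induced) path in `G`: a path such that the only edges of `G`
between its vertices are the edges of the path. -/
def IsInducedPathW (G : SimpleGraph V) {a b : V} (p : G.Walk a b) : Prop :=
  p.IsPath ∧ ∀ u v : V, u ∈ p.support → v ∈ p.support → G.Adj u v → p.toSubgraph.Adj u v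

/-- A hole of length `n` in `G`: an induced (chordless) cycle of length `n ≥ 4`,
given by an injection of `ZMod n` into `G` whose adjacencies are exactly the consecutive ones. -/
def IsHoleEmb (G : SimpleGraph V) (n : ℕ) (f : ZMod n → V) : Prop :=
  4 ≤ n ∧ Function.Injective f ∧
    ∀ i j : ZMod n, G.Adj (f i) (f j) ↔ (j = i + 1 ∨ i = j + 1)

/-- `G` contains an even hole (induced even cycle of length at least 4). -/
def ContainsEvenHole (G : SimpleGraph V) : Prop :=
  ∃ (n : ℕ) (f : ZMod n → V), IsHoleEmb G n f ∧ Even n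

/-- `G` contains a square (hole of length 4). -/
def ContainsSquare (G : SimpleGraph V) : Prop :=
  ∃ f : ZMod 4 → V, IsHoleEmb G 4 f

/-- `G` contains a theta as an induced subgraph: three internally vertex-disjoint chordless
paths from `a` to `b`, each of length at least 2, with no edges between the paths other than
those incident to `a` or `b` specified by the paths. -/
def ContainsTheta (G : SimpleGraph V) : Prop :=
  ∃ (a b : V) (p₁ p₂ p₃ : G.Walk a b),
    (IsInducedPathW G p₁ ∧ IsInducedPathW G p₂ ∧ IsInducedPathW G p₃) ∧
    (2 ≤ p₁.length ∧ 2 ≤ p₂.length ∧ 2 ≤ p₃.length) ∧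
    (∀ w : V, ((w ∈ p₁.support ∧ w ∈ p₂.support) ∨ (w ∈ p₁.support ∧ w ∈ p₃.support) ∨
          (w ∈ p₂.support ∧ w ∈ p₃.support)) → (w = a ∨ w = b)) ∧
    (∀ u w : V, u ≠ a → u ≠ b → w ≠ a → w ≠ b →
      ((u ∈ p₁.support ∧ w ∈ p₂.support) ∨ (u ∈ p₁.support ∧ w ∈ p₃.support) ∨
       (u ∈ p₂.support ∧ w ∈ p₃.support)) → ¬G.Adj u w)

/-- `G` contains a prism as an induced subgraph. -/
def ContainsPrism (G : SimpleGraph V) : Prop :=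
  ∃ (a₁ b₁ a₂ b₂ a₃ b₃ : V) (p₁ : G.Walk a₁ b₁) (p₂ : G.Walk a₂ b₂) (p₃ : G.Walk a₃ b₃),
    (IsInducedPathW G p₁ ∧ IsInducedPathW G p₂ ∧ IsInducedPathW G p₃) ∧
    (1 ≤ p₁.length ∧ 1 ≤ p₂.length ∧ 1 ≤ p₃.length) ∧
    (G.Adj a₁ a₂ ∧ G.Adj a₂ a₃ ∧ G.Adj a₁ a₃) ∧
    (G.Adj b₁ b₂ ∧ G.Adj b₂ b₃ ∧ G.Adj b₁ b₃) ∧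
    (∀ w : V, ¬(w ∈ p₁.support ∧ w ∈ p₂.support) ∧ ¬(w ∈ p₁.support ∧ w ∈ p₃.support) ∧
          ¬(w ∈ p₂.support ∧ w ∈ p₃.support)) ∧
    (∀ u w : V, u ∈ p₁.support → w ∈ p₂.support → G.Adj u w →
      (u = a₁ ∧ w = a₂) ∨ (u = b₁ ∧ w = b₂)) ∧
    (∀ u w : V, u ∈ p₁.support → w ∈ p₃.support → G.Adj u w →
      (u = a₁ ∧ w = a₃) ∨ (u = b₁ ∧ w = b₃)) ∧
    (∀ u w : V, u ∈ p₂.support → w ∈ p₃.support → G.Adj u w →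
      (u = a₂ ∧ w = a₃) ∨ (u = b₂ ∧ w = b₃))

/-- `G` contains a pyramid as an induced subgraph. -/
def ContainsPyramid (G : SimpleGraph V) : Prop :=
  ∃ (a b₁ b₂ b₃ : V) (p₁ : G.Walk a b₁) (p₂ : G.Walk a b₂) (p₃ : G.Walk a b₃),
    (IsInducedPathW G p₁ ∧ IsInducedPathW G p₂ ∧ IsInducedPathW G p₃) ∧
    (1 ≤ p₁.length ∧ 1 ≤ p₂.length ∧ 1 ≤ p₃.length) ∧
    ((2 ≤ p₁.length ∧ 2 ≤ p₂.length) ∨ (2 ≤ p₁.length ∧ 2 ≤ p₃.length) ∨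
     (2 ≤ p₂.length ∧ 2 ≤ p₃.length)) ∧
    (G.Adj b₁ b₂ ∧ G.Adj b₂ b₃ ∧ G.Adj b₁ b₃) ∧
    (∀ w : V, ((w ∈ p₁.support ∧ w ∈ p₂.support) ∨ (w ∈ p₁.support ∧ w ∈ p₃.support) ∨
          (w ∈ p₂.support ∧ w ∈ p₃.support)) → w = a) ∧
    (∀ u w : V, u ∈ p₁.support → w ∈ p₂.support → u ≠ a → w ≠ a → G.Adj u w →
      u = b₁ ∧ w = b₂) ∧
    (∀ u w : V, u ∈ p₁.support → w ∈ p₃.support → u ≠ a → w ≠ a → G.Adj u w →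
      u = b₁ ∧ w = b₃) ∧
    (∀ u w : V, u ∈ p₂.support → w ∈ p₃.support → u ≠ a → w ≠ a → G.Adj u w →
      u = b₂ ∧ w = b₃)

/-- `G` contains the cube as an induced subgraph: a hole of length 6 together with
two non-adjacent vertices `u, v` outside it, `u` adjacent to the even positions and
`v` adjacent to the odd positions. -/
def ContainsCube (G : SimpleGraph V) : Prop :=
  ∃ (f : ZMod 6 → V) (u v : V), IsHoleEmb G 6 f ∧
    u ∉ Set.range f ∧ v ∉ Set.range f ∧ ¬G.Adj u v ∧
    (∀ m : ZMod 6, G.Adj u (f m) ↔ (m = 0 ∨ m = 2 ∨ m = 4)) ∧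
    (∀ m : ZMod 6, G.Adj v (f m) ↔ (m = 1 ∨ m = 3 ∨ m = 5))

/-- `G` contains an even wheel: a hole plus a vertex outside it having at least 3 and
an even number of neighbors on the hole. -/
def ContainsEvenWheel (G : SimpleGraph V) : Prop :=
  ∃ (n : ℕ) (f : ZMod n → V) (u : V), IsHoleEmb G n f ∧ u ∉ Set.range f ∧
    3 ≤ {m : ZMod n | G.Adj u (f m)}.ncard ∧ Even {m : ZMod n | G.Adj u (f m)}.ncard

/-- `G` contains a butterfly: a wheel `(H,v)` with `N_H(v) = {a,b,c,d}`,
`ab, cd ∈ E(G)` and `bc, da ∉ E(G)`. -/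
def ContainsButterfly (G : SimpleGraph V) : Prop :=
  ∃ (n : ℕ) (f : ZMod n → V) (u : V), IsHoleEmb G n f ∧ u ∉ Set.range f ∧
    ∃ i j : ZMod n, i ≠ j ∧ i ≠ j + 1 ∧ i + 1 ≠ j ∧ i + 1 ≠ j + 1 ∧
      ¬G.Adj (f (i + 1)) (f j) ∧ ¬G.Adj (f (j + 1)) (f i) ∧
      (∀ m : ZMod n, G.Adj u (f m) ↔ (m = i ∨ m = i + 1 ∨ m = j ∨ m = j + 1))

/-- A 2-wheel in `G`: a hole `f` together with two distinct centers `u, v` outside the hole,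
each having at least three neighbors on the hole. -/
def Is2WheelCfg (G : SimpleGraph V) (n : ℕ) (f : ZMod n → V) (u v : V) : Prop :=
  IsHoleEmb G n f ∧ u ≠ v ∧ u ∉ Set.range f ∧ v ∉ Set.range f ∧
  3 ≤ {m : ZMod n | G.Adj u (f m)}.ncard ∧ 3 ≤ {m : ZMod n | G.Adj v (f m)}.ncard

/-- The 2-wheel `(f, {u,v})` is nested: the hole splits at `f i` and `f (i+d)` into two arcs,
with all neighbors of `u` on one arc and all neighbors of `v` on the other. -/
def NestedCfg (G : SimpleGraph V) (n : ℕ) (f : ZMod n → V) (u v : V) : Prop :=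
  ∃ (i : ZMod n) (d : ℕ), 1 ≤ d ∧ d < n ∧
    (∀ m : ZMod n, G.Adj u (f m) → ∃ e : ℕ, e ≤ d ∧ m = i + (e : ZMod n)) ∧
    (∀ m : ZMod n, G.Adj v (f m) → ∃ e : ℕ, e ≤ n - d ∧ m = i + (d : ZMod n) + (e : ZMod n))

/-- The 2-wheel `(f, {u,v})` is the cube. -/
def CubeCfg (G : SimpleGraph V) (n : ℕ) (f : ZMod n → V) (u v : V) : Prop :=
  n = 6 ∧ ∃ i : ZMod n,
    (∀ m : ZMod n, G.Adj u (f m) ↔ (m = i ∨ m = i + 2 ∨ m = i + 4)) ∧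
    (∀ m : ZMod n, G.Adj v (f m) ↔ (m = i + 1 ∨ m = i + 3 ∨ m = i + 5))

/-- The 2-wheel `(f, {u,v})` is a cousin wheel: `N_H(u) = {h₁,h₂,h₃}` and
`N_H(v) = {h₂,h₃,h₄}` for four consecutive vertices of the hole (or with `u, v` swapped). -/
def CousinCfg (G : SimpleGraph V) (n : ℕ) (f : ZMod n → V) (u v : V) : Prop :=
  (∃ i : ZMod n,
    (∀ m : ZMod n, G.Adj u (f m) ↔ (m = i ∨ m = i + 1 ∨ m = i + 2)) ∧
    (∀ m : ZMod n, G.Adj v (f m) ↔ (m = i + 1 ∨ m = i + 2 ∨ m = i + 3))) ∨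
  (∃ i : ZMod n,
    (∀ m : ZMod n, G.Adj v (f m) ↔ (m = i ∨ m = i + 1 ∨ m = i + 2)) ∧
    (∀ m : ZMod n, G.Adj u (f m) ↔ (m = i + 1 ∨ m = i + 2 ∨ m = i + 3)))

/-- A `u`-sector of the hole `f`: a subpath from `f i` to `f (i+d)` (`1 ≤ d < n`)
whose two ends are adjacent to `u` and whose internal vertices are not. -/
def IsSector (G : SimpleGraph V) (n : ℕ) (f : ZMod n → V) (u : V) (i : ZMod n) (d : ℕ) : Prop :=
  1 ≤ d ∧ d < n ∧ G.Adj u (f i) ∧ G.Adj u (f (i + (d : ZMod n))) ∧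
    ∀ m : ℕ, 0 < m → m < d → ¬G.Adj u (f (i + (m : ZMod n)))

/-- The class 𝒞: (theta, prism, pyramid, butterfly)-free graphs in which every 2-wheel
with non-adjacent centers is a nested wheel or a cousin wheel. -/
def InClassC (G : SimpleGraph V) : Prop :=
  ¬ContainsTheta G ∧ ¬ContainsPrism G ∧ ¬ContainsPyramid G ∧ ¬ContainsButterfly G ∧
  ∀ (n : ℕ) (f : ZMod n → V) (u v : V), Is2WheelCfg G n f u v → ¬G.Adj u v →
    (NestedCfg G n f u v ∨ CousinCfg G n f u v)

/-- `G` contains `S_{k,k,k}` as an induced subgraph: a root `r` and three legs of `k` edges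
each, with no other adjacencies among these vertices. -/
def ContainsSpider (G : SimpleGraph V) (k : ℕ) : Prop :=
  ∃ (r : V) (f : Fin 3 → Fin k → V),
    (∀ (j : Fin 3) (m : Fin k), f j m ≠ r) ∧
    (∀ (j₁ : Fin 3) (m₁ : Fin k) (j₂ : Fin 3) (m₂ : Fin k),
      f j₁ m₁ = f j₂ m₂ → j₁ = j₂ ∧ m₁ = m₂) ∧
    (∀ (j : Fin 3) (m : Fin k), G.Adj r (f j m) ↔ (m : ℕ) = 0) ∧
    (∀ (j₁ : Fin 3) (m₁ : Fin k) (j₂ : Fin 3) (m₂ : Fin k),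
      G.Adj (f j₁ m₁) (f j₂ m₂) ↔
        (j₁ = j₂ ∧ ((m₁ : ℕ) + 1 = (m₂ : ℕ) ∨ (m₂ : ℕ) + 1 = (m₁ : ℕ))))

/-- A `k`-span-wheel in `G`: a hole `f` of length `n`, with `x = f 0` and `y = f p`
non-adjacent, the two paths `P_A = f 0, f 1, …, f p` and `P_B = f 0, f (n-1), …, f p`,
and centers `c 0, …, c (k-1)` outside the hole such that `{c i} ∪ {x,y}` is independent,
every center has at least three neighbors on the hole and neighbors in the interiors of
both `P_A` and `P_B`, and the neighbors of the centers appear along both `P_A` and `P_B`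
(from `x` to `y`) in the order of the centers. -/
def IsSpanWheel (G : SimpleGraph V) (k n p : ℕ) (f : ZMod n → V) (c : Fin k → V) : Prop :=
  IsHoleEmb G n f ∧
  2 ≤ p ∧ p ≤ n - 2 ∧
  ¬G.Adj (f 0) (f (p : ZMod n)) ∧
  Function.Injective c ∧
  (∀ i : Fin k, c i ∉ Set.range f) ∧
  (∀ i j : Fin k, i ≠ j → ¬G.Adj (c i) (c j)) ∧
  (∀ i : Fin k, ¬G.Adj (c i) (f 0)) ∧
  (∀ i : Fin k, ¬G.Adj (c i) (f (p : ZMod n))) ∧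
  (∀ i : Fin k, 3 ≤ {m : ZMod n | G.Adj (c i) (f m)}.ncard) ∧
  (∀ i : Fin k, ∃ a : ℕ, 0 < a ∧ a < p ∧ G.Adj (c i) (f (a : ZMod n))) ∧
  (∀ i : Fin k, ∃ b : ℕ, p < b ∧ b < n ∧ G.Adj (c i) (f (b : ZMod n))) ∧
  (∀ i j : Fin k, i < j → ∀ a₁ a₂ : ℕ, a₁ ≤ p → a₂ ≤ p →
    G.Adj (c i) (f (a₁ : ZMod n)) → G.Adj (c j) (f (a₂ : ZMod n)) → a₁ ≤ a₂) ∧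
  (∀ i j : Fin k, i < j → ∀ b₁ b₂ : ℕ, p ≤ b₁ → b₁ ≤ n → p ≤ b₂ → b₂ ≤ n →
    G.Adj (c i) (f (b₁ : ZMod n)) → G.Adj (c j) (f (b₂ : ZMod n)) → b₂ ≤ b₁)

/-- `X` separates `s` from `t` in `G`: neither is in `X` and every walk from `s` to `t`
meets `X`. -/
def Separates (G : SimpleGraph V) (X : Set V) (s t : V) : Prop :=
  s ∉ X ∧ t ∉ X ∧ ∀ p : G.Walk s t, ∃ w ∈ p.support, w ∈ X

/-- `X` is a minimal separator of `G`: for some pair `s, t` it is an inclusion-wise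
minimal `st`-separator. -/
def MinSeparator (G : SimpleGraph V) (X : Set V) : Prop :=
  ∃ s t : V, Separates G X s t ∧ ∀ Y ⊆ X, Separates G Y s t → Y = X

/-- `A` is a connected component of `G ∖ C` that is full to `C`. -/
def IsFullComponent (G : SimpleGraph V) (C A : Set V) : Prop :=
  A.Nonempty ∧ Disjoint A C ∧ (G.induce A).Connected ∧
  (∀ a ∈ A, ∀ w : V, G.Adj a w → w ∈ A ∪ C) ∧
  (∀ x ∈ C, ∃ a ∈ A, G.Adj x a)

/-- A tree decomposition of `G` with tree `T` and bags `B`. -/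
def IsTreeDecomp (G : SimpleGraph V) {ι : Type} (T : SimpleGraph ι) (B : ι → Finset V) : Prop :=
  T.IsTree ∧
  (∀ v : V, ∃ i, v ∈ B i) ∧
  (∀ u v : V, G.Adj u v → ∃ i, u ∈ B i ∧ v ∈ B i) ∧
  (∀ (v : V) (i j : ι), v ∈ B i → v ∈ B j →
    ∀ (p : T.Walk i j), p.IsPath → ∀ x ∈ p.support, v ∈ B x)

/-- The treewidth of a finite graph: the least `w` such that `G` has a tree decomposition
all of whose bags have size at most `w + 1`. -/
noncomputable def treewidth (G : SimpleGraph V) : ℕ :=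
  sInf {w : ℕ | ∃ (m : ℕ) (T : SimpleGraph (Fin m)) (B : Fin m → Finset V),
    IsTreeDecomp G T B ∧ ∀ i, (B i).card ≤ w + 1}

/-- A graph is chordal iff it has no hole. -/
def IsChordal (G : SimpleGraph V) : Prop :=
  ¬∃ (n : ℕ) (f : ZMod n → V), IsHoleEmb G n f

/-- `H` is obtained from `G` by a minimal fill-in (minimal chordal completion). -/
def IsMinimalChordalCompletion (G H : SimpleGraph V) : Prop :=
  G ≤ H ∧ IsChordal H ∧ ∀ H' : SimpleGraph V, G ≤ H' → H' ≤ H → IsChordal H' → H' = H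

/-- `Ω` is a potential maximal clique of `G`: a maximal clique of some minimal chordal
completion of `G`. -/
def IsPMC (G : SimpleGraph V) (Ω : Set V) : Prop :=
  ∃ H : SimpleGraph V, IsMinimalChordalCompletion G H ∧ H.IsClique Ω ∧
    ∀ Ω' : Set V, H.IsClique Ω' → Ω ⊆ Ω' → Ω' = Ω

/-- `n` satisfies the Ramsey property for `(t, k)`: every graph on `n` vertices has a
clique of size `t` or an independent set of size `k`. -/
def RamseyProp (n t k : ℕ) : Prop :=
  ∀ G : SimpleGraph (Fin n),
    (∃ S : Finset (Fin n), G.IsNClique t S) ∨ (∃ S : Finset (Fin n), Gᶜ.IsNClique k S)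

/-- The Ramsey number `R(t, k)`. -/
noncomputable def ramseyNumber (t k : ℕ) : ℕ := sInf {n : ℕ | RamseyProp n t k}

namespace Aux7

set_option linter.unusedSectionVars false

/-- `a` and `b` are joined by a walk inside `T`. -/
def Link (G : SimpleGraph V) (T : Set V) (a b : V) : Prop :=
  ∃ p : G.Walk a b, ∀ w ∈ p.support, w ∈ T

lemma Link.trans {G : SimpleGraph V} {T : Set V} {a b c : V} (h : Link G T a b)
    (h' : Link G T b c) : Link G T a c := by
  obtain ⟨p, hp⟩ := h
  obtain ⟨q, hq⟩ := h'
  refine ⟨p.append q, fun w hw => ?_⟩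
  rw [SimpleGraph.Walk.mem_support_append_iff] at hw
  exact hw.elim (hp w) (hq w)

lemma Link.symm {G : SimpleGraph V} {T : Set V} {a b : V} (h : Link G T a b) :
    Link G T b a := by
  obtain ⟨p, hp⟩ := h
  refine ⟨p.reverse, fun w hw => hp w ?_⟩
  simpa using hw

lemma Link.edge {G : SimpleGraph V} {T : Set V} {a b : V} (h : G.Adj a b) (ha : a ∈ T)
    (hb : b ∈ T) : Link G T a b := by
  refine ⟨h.toWalk, fun w hw => ?_⟩
  simp at hw
  rcases hw with rfl | rfl <;> assumption

lemma Link.refl {G : SimpleGraph V} {T : Set V} {a : V} (ha : a ∈ T) : Link G T a a := by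
  refine ⟨SimpleGraph.Walk.nil, fun w hw => ?_⟩
  simp at hw
  rwa [hw]

lemma Link.mono {G : SimpleGraph V} {T T' : Set V} {a b : V} (h : Link G T a b)
    (hT : T ⊆ T') : Link G T' a b := by
  obtain ⟨p, hp⟩ := h
  exact ⟨p, fun w hw => hT (hp w hw)⟩

/-- walking along a segment of a sequence -/
lemma Link.seg {G : SimpleGraph V} {T : Set V} (g : ℕ → V) (i j : ℕ) (hij : i ≤ j)
    (hadj : ∀ k, i ≤ k → k < j → G.Adj (g k) (g (k + 1)))
    (hT : ∀ k, i ≤ k → k ≤ j → g k ∈ T) : Link G T (g i) (g j) := by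
  induction j, hij using Nat.le_induction with
  | base => exact Link.refl (hT i le_rfl le_rfl)
  | succ j hj ih =>
    refine (ih (fun k h1 h2 => hadj k h1 (by omega)) (fun k h1 h2 => hT k h1 (by omega))).trans
      (Link.edge (hadj j hj (by omega)) (hT _ hj (by omega)) (hT _ (by omega) le_rfl))

/-- a shortest walk inside `T` is an induced path -/
lemma Link.induced {G : SimpleGraph V} {T : Set V} {a b : V} (h : Link G T a b) :
    ∃ p : G.Walk a b, IsInducedPathW G p ∧ ∀ w ∈ p.support, w ∈ T := by
  classical
  have hex : ∃ l, ∃ p : G.Walk a b, (∀ w ∈ p.support, w ∈ T) ∧ p.length = l := by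
    obtain ⟨p, hp⟩ := h
    exact ⟨_, p, hp, rfl⟩
  obtain ⟨p, hpT, hpl⟩ := Nat.find_spec hex
  have hmin : ∀ q : G.Walk a b, (∀ w ∈ q.support, w ∈ T) → p.length ≤ q.length := by
    intro q hq
    rw [hpl]
    exact Nat.find_min' hex ⟨q, hq, rfl⟩
  have hpath : p.IsPath := by
    have h1 := hmin p.bypass (fun w hw => hpT w (p.support_bypass_subset_support hw))
    have := p.bypass_eq_self_of_length_le_length_bypass h1
    rw [← this]
    exact p.bypass_isPath
  have key : ∀ i j, i < j → j ≤ p.length → G.Adj (p.getVert i) (p.getVert j) → j = i + 1 := by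
    intro i j hij hj hadj
    have := hmin ((p.take i).append (SimpleGraph.Walk.cons hadj (p.drop j))) (by
      intro w hw
      rw [SimpleGraph.Walk.mem_support_append_iff] at hw
      rcases hw with hw | hw
      · exact hpT w ((p.isSubwalk_take i).support_subset hw)
      · rw [SimpleGraph.Walk.support_cons, List.mem_cons] at hw
        rcases hw with rfl | hw
        · exact hpT _ (p.getVert_mem_support i)
        · exact hpT w ((p.isSubwalk_drop j).support_subset hw))
    simp at this
    omega
  refine ⟨p, ⟨hpath, ?_⟩, hpT⟩
  intro x y hx hy hxy
  rw [SimpleGraph.Walk.mem_support_iff_exists_getVert] at hx hy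
  obtain ⟨i, rfl, hi⟩ := hx
  obtain ⟨j, rfl, hj⟩ := hy
  rcases lt_trichotomy i j with h | h | h
  · have := key i j h hj hxy
    subst this
    exact p.toSubgraph_adj_getVert (by omega)
  · subst h
    exact absurd hxy (G.loopless.irrefl _)
  · have := key j i h hi hxy.symm
    subst this
    exact (p.toSubgraph_adj_getVert (by omega)).symm

/-- `a` and `b` are joined through `S`. -/
def Thru (G : SimpleGraph V) (S : Set V) (a b : V) : Prop :=
  ∃ s e, G.Adj a s ∧ G.Adj b e ∧ s ∈ S ∧ e ∈ S ∧ Link G S s e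

lemma Thru.path {G : SimpleGraph V} {S : Set V} {a b : V} (h : Thru G S a b) (hne : a ≠ b)
    (hnadj : ¬ G.Adj a b) :
    ∃ p : G.Walk a b, IsInducedPathW G p ∧ 2 ≤ p.length ∧
      ∀ w ∈ p.support, w = a ∨ w = b ∨ w ∈ S := by
  obtain ⟨s, e, has, hbe, hs, he, hl⟩ := h
  have hsub : S ⊆ {w | w = a ∨ w = b ∨ w ∈ S} := fun w hw => Or.inr (Or.inr hw)
  have : Link G {w | w = a ∨ w = b ∨ w ∈ S} a b :=
    (Link.edge has (Or.inl rfl) (hsub hs)).trans ((hl.mono hsub).trans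
      (Link.edge hbe.symm (hsub he) (Or.inr (Or.inl rfl))))
  obtain ⟨p, hp, hpT⟩ := this.induced
  refine ⟨p, hp, ?_, hpT⟩
  by_contra hlt
  have : p.length = 0 ∨ p.length = 1 := by omega
  rcases this with h0 | h1
  · exact hne (SimpleGraph.Walk.eq_of_length_eq_zero h0)
  · exact hnadj (SimpleGraph.Walk.adj_of_length_eq_one h1)

lemma theta_of_sets {G : SimpleGraph V} (a b : V) (S₁ S₂ S₃ : Set V) (hne : a ≠ b)
    (hnadj : ¬ G.Adj a b) (h1 : Thru G S₁ a b) (h2 : Thru G S₂ a b) (h3 : Thru G S₃ a b)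
    (h12 : ∀ x ∈ S₁, ∀ y ∈ S₂, x ≠ y ∧ ¬ G.Adj x y)
    (h13 : ∀ x ∈ S₁, ∀ y ∈ S₃, x ≠ y ∧ ¬ G.Adj x y)
    (h23 : ∀ x ∈ S₂, ∀ y ∈ S₃, x ≠ y ∧ ¬ G.Adj x y) : ContainsTheta G := by
  obtain ⟨p1, i1, l1, s1⟩ := h1.path hne hnadj
  obtain ⟨p2, i2, l2, s2⟩ := h2.path hne hnadj
  obtain ⟨p3, i3, l3, s3⟩ := h3.path hne hnadj
  refine ⟨a, b, p1, p2, p3, ⟨i1, i2, i3⟩, ⟨l1, l2, l3⟩, ?_, ?_⟩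
  · intro w hw
    by_contra hcon
    push Not at hcon
    rcases hw with ⟨ha, hb⟩ | ⟨ha, hb⟩ | ⟨ha, hb⟩
    · have ha := s1 w ha; have hb := s2 w hb
      exact (h12 w (by tauto) w (by tauto)).1 rfl
    · have ha := s1 w ha; have hb := s3 w hb
      exact (h13 w (by tauto) w (by tauto)).1 rfl
    · have ha := s2 w ha; have hb := s3 w hb
      exact (h23 w (by tauto) w (by tauto)).1 rfl
  · intro x y hxa hxb hya hyb hw
    rcases hw with ⟨ha, hb⟩ | ⟨ha, hb⟩ | ⟨ha, hb⟩
    · have ha := s1 x ha; have hb := s2 y hb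
      exact (h12 x (by tauto) y (by tauto)).2
    · have ha := s1 x ha; have hb := s3 y hb
      exact (h13 x (by tauto) y (by tauto)).2
    · have ha := s2 x ha; have hb := s3 y hb
      exact (h23 x (by tauto) y (by tauto)).2

/-- A hole written as a sequence, with a `u`-sector from `0` to `b`. -/
structure Cfg (G : SimpleGraph V) (n b : ℕ) (g : ℕ → V) (u v : V) : Prop where
  tri : ∀ x y z, G.Adj x y → G.Adj x z → ¬ G.Adj y z
  noTheta : ¬ ContainsTheta G
  b0 : 0 < b
  bn : b < n
  adj : ∀ i j, i < j → j < n → (G.Adj (g i) (g j) ↔ (j = i + 1 ∨ (i = 0 ∧ j = n - 1)))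
  inj : ∀ i j, i < j → j < n → g i ≠ g j
  une : ∀ i, i < n → u ≠ g i
  vne : ∀ i, i < n → v ≠ g i
  huv : ¬ G.Adj u v
  hne : u ≠ v
  u0 : G.Adj u (g 0)
  ub : G.Adj u (g b)
  usec : ∀ i, 0 < i → i < b → ¬ G.Adj u (g i)
  ut : ∃ t, b < t ∧ t < n ∧ G.Adj u (g t)
  vz : ∃ z, 0 < z ∧ z < b ∧ G.Adj v (g z)

/-- the segment of a sequence -/
def Seg (g : ℕ → V) (i j : ℕ) : Set V := {x | ∃ k, i ≤ k ∧ k ≤ j ∧ x = g k}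

namespace Cfg
variable {G : SimpleGraph V} {n b : ℕ} {g : ℕ → V} {u v : V}

lemma mirror (h : Cfg G n b g u v) :
    Cfg G n b (fun i => if i ≤ b then g (b - i) else g (n + b - i)) u v := by
  have hb0 := h.b0
  have hbn := h.bn
  refine ⟨h.tri, h.noTheta, h.b0, h.bn, ?_, ?_, ?_, ?_, h.huv, h.hne, ?_, ?_, ?_, ?_, ?_⟩
  · intro i j hij hj
    split_ifs with h1 h2 h2
    · rw [G.adj_comm, h.adj _ _ (by omega) (by omega)]; omega
    · rw [h.adj _ _ (by omega) (by omega)]; omega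
    · omega
    · rw [G.adj_comm, h.adj _ _ (by omega) (by omega)]; omega
  · intro i j hij hj
    split_ifs with h1 h2 h2
    · exact (h.inj _ _ (by omega) (by omega)).symm
    · exact (h.inj _ _ (by omega) (by omega))
    · omega
    · exact (h.inj _ _ (by omega) (by omega)).symm
  · intro i hi
    split_ifs with h1
    · exact h.une _ (by omega)
    · exact h.une _ (by omega)
  · intro i hi
    split_ifs with h1
    · exact h.vne _ (by omega)
    · exact h.vne _ (by omega)
  · simpa using h.ub
  · simpa using h.u0
  · intro i h0 hi
    rw [if_pos hi.le]
    exact h.usec _ (by omega) (by omega)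
  · obtain ⟨t, h1, h2, h3⟩ := h.ut
    refine ⟨n + b - t, by omega, by omega, ?_⟩
    rw [if_neg (by omega), show n + b - (n + b - t) = t by omega]
    exact h3
  · obtain ⟨t, h1, h2, h3⟩ := h.vz
    refine ⟨b - t, by omega, by omega, ?_⟩
    rw [if_pos (by omega), show b - (b - t) = t by omega]
    exact h3

lemma succ (h : Cfg G n b g u v) (k : ℕ) (hk : k + 1 < n) : G.Adj (g k) (g (k + 1)) :=
  (h.adj k (k + 1) (by omega) hk).2 (Or.inl rfl)

lemma last (h : Cfg G n b g u v) : G.Adj (g 0) (g (n - 1)) := by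
  have := h.b0; have := h.bn
  exact (h.adj 0 (n - 1) (by omega) (by omega)).2 (by omega)

lemma seg (h : Cfg G n b g u v) {T : Set V} {i j p q : ℕ} (hq : q < n) (hpi : p ≤ i) (hiq : i ≤ q)
    (hpj : p ≤ j) (hjq : j ≤ q) (hT : Seg g p q ⊆ T) : Link G T (g i) (g j) := by
  rcases le_total i j with hij | hij
  · exact Link.seg g i j hij (fun k _ _ => h.succ k (by omega))
      (fun k _ _ => hT ⟨k, by omega, by omega, rfl⟩)
  · exact (Link.seg g j i hij (fun k _ _ => h.succ k (by omega))
      (fun k _ _ => hT ⟨k, by omega, by omega, rfl⟩)).symm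

lemma thruSeg (h : Cfg G n b g u v) {p q i j : ℕ} {a c : V} (hq : q < n) (hpi : p ≤ i)
    (hiq : i ≤ q) (hpj : p ≤ j) (hjq : j ≤ q) (ha : G.Adj a (g i)) (hc : G.Adj c (g j)) :
    Thru G (Seg g p q) a c :=
  ⟨g i, g j, ha, hc, ⟨i, hpi, hiq, rfl⟩, ⟨j, hpj, hjq, rfl⟩,
    h.seg hq hpi hiq hpj hjq subset_rfl⟩

lemma thruIns (h : Cfg G n b g u v) {p q i j : ℕ} {a c d : V} (hq : q < n) (hpi : p ≤ i)
    (hiq : i ≤ q) (hpj : p ≤ j) (hjq : j ≤ q) (ha : G.Adj a d) (hd : G.Adj d (g i))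
    (hc : G.Adj c (g j)) : Thru G (insert d (Seg g p q)) a c :=
  ⟨d, g j, ha, hc, Set.mem_insert _ _, Set.mem_insert_of_mem _ ⟨j, hpj, hjq, rfl⟩,
    (Link.edge hd (Set.mem_insert _ _)
      (Set.mem_insert_of_mem _ (show g i ∈ Seg g p q from ⟨i, hpi, hiq, rfl⟩))).trans
    (h.seg hq hpi hiq hpj hjq (Set.subset_insert _ _))⟩

/-- two segments at distance at least two -/
lemma segseg (h : Cfg G n b g u v) {p q r s : ℕ} (h1 : q + 1 < r) (h2 : s < n)
    (h3 : 0 < p ∨ s + 1 < n) : ∀ x ∈ Seg g p q, ∀ y ∈ Seg g r s, x ≠ y ∧ ¬ G.Adj x y := by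
  rintro x ⟨i, hi1, hi2, rfl⟩ y ⟨j, hj1, hj2, rfl⟩
  refine ⟨h.inj i j (by omega) (by omega), ?_⟩
  rw [h.adj i j (by omega) (by omega)]
  omega

lemma anti_symm {S T : Set V} (h : ∀ x ∈ S, ∀ y ∈ T, x ≠ y ∧ ¬ G.Adj x y) :
    ∀ x ∈ T, ∀ y ∈ S, x ≠ y ∧ ¬ G.Adj x y := fun x hx y hy =>
  ⟨(h y hy x hx).1.symm, fun h' => (h y hy x hx).2 h'.symm⟩

lemma anti_ins {S T : Set V} {d : V} (h : ∀ x ∈ S, ∀ y ∈ T, x ≠ y ∧ ¬ G.Adj x y)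
    (hd : ∀ x ∈ S, d ≠ x ∧ ¬ G.Adj d x) :
    ∀ x ∈ S, ∀ y ∈ insert d T, x ≠ y ∧ ¬ G.Adj x y := by
  rintro x hx y (rfl | hy)
  · exact ⟨(hd x hx).1.symm, fun h' => (hd x hx).2 h'.symm⟩
  · exact h x hx y hy

lemma anti_seg {d : V} {p q : ℕ} (h : ∀ k, p ≤ k → k ≤ q → d ≠ g k ∧ ¬ G.Adj d (g k)) :
    ∀ x ∈ Seg g p q, d ≠ x ∧ ¬ G.Adj d x := by
  rintro x ⟨k, h1, h2, rfl⟩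
  exact h k h1 h2

/-- no common adjacency with consecutive vertices -/
lemma noCons (h : Cfg G n b g u v) {d : V} {k : ℕ} (hk : k + 1 < n) (h1 : G.Adj d (g k)) :
    ¬ G.Adj d (g (k + 1)) := fun h2 => h.tri _ _ _ h1 h2 (h.succ k hk)

lemma noLast (h : Cfg G n b g u v) {d : V} (h1 : G.Adj d (g 0)) : ¬ G.Adj d (g (n - 1)) :=
  fun h2 => h.tri _ _ _ h1 h2 h.last

lemma ut' (h : Cfg G n b g u v) : ∃ t, b + 2 ≤ t ∧ t ≤ n - 2 ∧ G.Adj u (g t) := by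
  obtain ⟨t, h1, h2, h3⟩ := h.ut
  refine ⟨t, ?_, ?_, h3⟩
  · by_contra hh
    obtain rfl : t = b + 1 := by omega
    exact h.noCons h2 h.ub h3
  · by_contra hh
    obtain rfl : t = n - 1 := by omega
    exact h.noLast h.u0 h3

/-- theta A -/
lemma thetaA (h : Cfg G n b g u v) {z z' w : ℕ} (hzz : z < z') (hz' : z' ≤ b)
    (vz : G.Adj v (g z)) (vz' : G.Adj v (g z')) (hw : b + 2 ≤ w) (hw' : w ≤ n - 2)
    (vw : G.Adj v (g w)) : False := by
  have hb0 := h.b0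
  have hbn := h.bn
  obtain ⟨t, ht1, ht2, hut⟩ := h.ut'
  have hz2 : z + 1 < z' := by
    by_contra hh
    obtain rfl : z' = z + 1 := by omega
    exact h.noCons (by omega) vz vz'
  refine h.noTheta (theta_of_sets u v (Seg g 0 z) (Seg g z' b) (Seg g (b + 2) (n - 2)) h.hne h.huv
    (h.thruSeg (i := 0) (j := z) ?_ ?_ ?_ ?_ ?_ h.u0 vz)
    (h.thruSeg (i := b) (j := z') ?_ ?_ ?_ ?_ ?_ h.ub vz')
    (h.thruSeg (i := t) (j := w) ?_ ?_ ?_ ?_ ?_ hut vw)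
    (h.segseg ?_ ?_ ?_) (h.segseg ?_ ?_ ?_) (h.segseg ?_ ?_ ?_)) <;> omega

/-- theta C -/
lemma thetaC (h : Cfg G n b g u v) {z w : ℕ} (hz0 : 0 < z) (hz' : z < b)
    (vz : G.Adj v (g z)) (hz : ∀ k, k ≤ b → k ≠ z → ¬ G.Adj v (g k))
    (hw : b + 2 ≤ w) (hw' : w ≤ n - 2)
    (vw : G.Adj v (g w)) : False := by
  have hb0 := h.b0
  have hbn := h.bn
  obtain ⟨t, ht1, ht2, hut⟩ := h.ut'
  have e1 : G.Adj (g z) (g (z - 1)) := by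
    have := h.succ (z - 1) (by omega)
    rw [show z - 1 + 1 = z by omega] at this
    exact this.symm
  have e2 : G.Adj (g z) (g (z + 1)) := h.succ z (by omega)
  refine h.noTheta (theta_of_sets (g z) u (Seg g 0 (z - 1)) (Seg g (z + 1) b)
    (insert v (Seg g (b + 2) (n - 2))) (h.une z (by omega)).symm
    (fun h' => h.usec z hz0 hz' h'.symm)
    (h.thruSeg (i := z - 1) (j := 0) ?_ ?_ ?_ ?_ ?_ e1 h.u0)
    (h.thruSeg (i := z + 1) (j := b) ?_ ?_ ?_ ?_ ?_ e2 h.ub)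
    (h.thruIns (i := w) (j := t) ?_ ?_ ?_ ?_ ?_ vz.symm vw hut)
    (h.segseg ?_ ?_ ?_) (anti_ins (h.segseg ?_ ?_ ?_) (anti_seg ?_))
    (anti_ins (h.segseg ?_ ?_ ?_) (anti_seg ?_))) <;> first
      | omega
      | exact fun k _ _ => ⟨h.vne k (by omega), hz k (by omega) (by omega)⟩

lemma seg_single (i : ℕ) : g i ∈ Seg g i i := ⟨i, le_rfl, le_rfl, rfl⟩

/-- theta B -/
lemma thetaB (h : Cfg G n b g u v) {z z' : ℕ} (hzz : z < z') (hz' : z' ≤ b)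
    (vz : G.Adj v (g z)) (vz' : G.Adj v (g z')) (vx : G.Adj v (g (n - 1))) : False := by
  have hb0 := h.b0
  have hbn := h.bn
  obtain ⟨t, ht1, ht2, hut⟩ := h.ut'
  have hz2 : z + 1 < z' := by
    by_contra hh
    obtain rfl : z' = z + 1 := by omega
    exact h.noCons (by omega) vz vz'
  have v0 : ¬ G.Adj v (g 0) := fun h' => h.noLast h' vx
  have hz0 : 0 < z := by
    rcases Nat.eq_zero_or_pos z with rfl | h'
    · exact absurd vz v0
    · exact h'
  refine h.noTheta (theta_of_sets (g 0) v (Seg g 1 z)  (Seg g (n - 1) (n - 1))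
    (insert u (Seg g z' b)) (h.vne 0 (by omega)).symm (fun h' => v0 h'.symm)
    (h.thruSeg (i := 1) (j := z) ?_ ?_ ?_ ?_ ?_ (h.succ 0 ?_) vz)
    (h.thruSeg (i := n - 1) (j := n - 1) ?_ ?_ ?_ ?_ ?_ h.last vx)
    (h.thruIns (i := b) (j := z') ?_ ?_ ?_ ?_ ?_ h.u0.symm h.ub vz')
    (h.segseg ?_ ?_ ?_) (anti_ins (h.segseg ?_ ?_ ?_) (anti_seg ?_))
    (anti_ins (anti_symm (h.segseg ?_ ?_ ?_)) (anti_seg ?_))) <;> try omega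
  · exact fun k _ _ => ⟨h.une k (by omega), h.usec k (by omega) (by omega)⟩
  · intro k _ _
    obtain rfl : k = n - 1 := by omega
    exact ⟨h.une _ (by omega), h.noLast h.u0⟩

/-- theta D -/
lemma thetaD (h : Cfg G n b g u v) {z t : ℕ} (hz0 : 0 < z) (hz' : z < b)
    (vz : G.Adj v (g z)) (vx : G.Adj v (g (n - 1))) (vy : G.Adj v (g (b + 1)))
    (ht : b < t) (ht' : t + 2 < n) (hut : G.Adj u (g t)) : False := by
  have hb0 := h.b0
  have hbn := h.bn
  have v0 : ¬ G.Adj v (g 0) := fun h' => h.noLast h' vx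
  refine h.noTheta (theta_of_sets (g 0) v (Seg g 1 z)  (Seg g (n - 1) (n - 1))
    (insert u (Seg g (b + 1) t)) (h.vne 0 (by omega)).symm (fun h' => v0 h'.symm)
    (h.thruSeg (i := 1) (j := z) ?_ ?_ ?_ ?_ ?_ (h.succ 0 ?_) vz)
    (h.thruSeg (i := n - 1) (j := n - 1) ?_ ?_ ?_ ?_ ?_ h.last vx)
    (h.thruIns (i := t) (j := b + 1) ?_ ?_ ?_ ?_ ?_ h.u0.symm hut vy)
    (h.segseg ?_ ?_ ?_) (anti_ins (h.segseg ?_ ?_ ?_) (anti_seg ?_))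
    (anti_ins (anti_symm (h.segseg ?_ ?_ ?_)) (anti_seg ?_))) <;> try omega
  · exact fun k _ _ => ⟨h.une k (by omega), h.usec k (by omega) (by omega)⟩
  · intro k _ _
    obtain rfl : k = n - 1 := by omega
    exact ⟨h.une _ (by omega), h.noLast h.u0⟩

/-- theta E -/
lemma thetaE (h : Cfg G n b g u v) {z : ℕ} (hz0 : 1 < z) (hz' : z < b)
    (vz : G.Adj v (g z)) (hz : ∀ k, k ≤ b → k ≠ z → ¬ G.Adj v (g k))
    (vx : G.Adj v (g (n - 1))) : False := by
  have hb0 := h.b0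
  have hbn := h.bn
  obtain ⟨t, ht1, ht2, hut⟩ := h.ut'
  have e1 : G.Adj (g z) (g (z - 1)) := by
    have := h.succ (z - 1) (by omega)
    rw [show z - 1 + 1 = z by omega] at this
    exact this.symm
  have e2 : G.Adj (g z) (g (z + 1)) := h.succ z (by omega)
  have hthru : Thru G (insert v (Seg g (n - 1) (n - 1))) (g z) (g 0) :=
    h.thruIns (i := n - 1) (j := n - 1) (by omega) le_rfl le_rfl le_rfl le_rfl vz.symm vx h.last
  refine h.noTheta (theta_of_sets (g z) (g 0) (Seg g 1 (z - 1)) (insert u (Seg g (z + 1) b))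
    (insert v (Seg g (n - 1) (n - 1))) (h.inj 0 z (by omega) (by omega)).symm
    (fun h' => ?_)
    (h.thruSeg (i := z - 1) (j := 1) ?_ ?_ ?_ ?_ ?_ e1 (h.succ 0 ?_))
    ?_ hthru
    (anti_ins (h.segseg ?_ ?_ ?_) (anti_seg ?_))
    (anti_ins (h.segseg ?_ ?_ ?_) (anti_seg ?_))
    (anti_symm (anti_ins (anti_symm (anti_ins (h.segseg ?_ ?_ ?_) (anti_seg ?_))) ?_)))
    <;> try omega
  · have := (h.adj 0 z (by omega) (by omega)).1 h'.symm
    omega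
  · obtain ⟨s, e, h1, h2, h3, h4, h5⟩ := h.thruIns (p := z + 1) (q := b) (i := b) (j := z + 1)
      (a := g 0) (c := g z) (by omega) (by omega) (by omega) (by omega) (by omega) h.u0.symm h.ub e2
    exact ⟨e, s, h2, h1, h4, h3, h5.symm⟩
  · exact fun k _ _ => ⟨h.une k (by omega), h.usec k (by omega) (by omega)⟩
  · exact fun k _ _ => ⟨h.vne k (by omega), hz k (by omega) (by omega)⟩
  · exact fun k _ _ => ⟨h.vne k (by omega), hz k (by omega) (by omega)⟩
  · rintro x (rfl | ⟨k, _, _, rfl⟩)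
    · exact ⟨h.hne, h.huv⟩
    · obtain rfl : k = n - 1 := by omega
      exact ⟨h.une _ (by omega), h.noLast h.u0⟩

/-- Main conclusion: if `v` has a neighbour outside the sector and at least three neighbours,
then the configuration is a cube. -/
lemma cube (h : Cfg G n b g u v) {w : ℕ} (hw : b < w) (hwn : w < n) (vw : G.Adj v (g w))
    (h3 : ∀ i j, ∃ k, k < n ∧ k ≠ i ∧ k ≠ j ∧ G.Adj v (g k)) :
    n = 6 ∧ b = 2 ∧ (∀ k, k < 6 → (G.Adj u (g k) ↔ (k = 0 ∨ k = 2 ∨ k = 4))) ∧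
      (∀ k, k < 6 → (G.Adj v (g k) ↔ (k = 1 ∨ k = 3 ∨ k = 5))) := by
  have hb0 := h.b0
  have hbn := h.bn
  have hm := h.mirror
  obtain ⟨z, hz0, hzb, vz⟩ := h.vz
  obtain ⟨t, ht1, ht2, hut⟩ := h.ut'
  have hz : ∀ k, k ≤ b → k ≠ z → ¬ G.Adj v (g k) := by
    -- otherwise two neighbours in the sector
    have two : ∀ i j, i < j → j ≤ b → G.Adj v (g i) → G.Adj v (g j) → False := by
      intro i j hij hj vi vj
      by_cases c1 : b + 2 ≤ w ∧ w ≤ n - 2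
      · exact h.thetaA hij hj vi vj c1.1 c1.2 vw
      · have : w = n - 1 ∨ w = b + 1 := by omega
        rcases this with rfl | rfl
        · exact h.thetaB hij hj vi vj vw
        · refine hm.thetaB (z := b - j) (z' := b - i) (by omega) (by omega) ?_ ?_ ?_
          · rw [if_pos (by omega), show b - (b - j) = j by omega]; exact vj
          · rw [if_pos (by omega), show b - (b - i) = i by omega]; exact vi
          · rw [if_neg (by omega), show n + b - (n - 1) = b + 1 by omega]; exact vw
    intro k hk hkz vk
    rcases lt_or_gt_of_ne hkz with hlt | hlt
    · exact two k z hlt hzb.le vk vz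
    · exact two z k hlt hk vz vk
  have hQ : ∀ k, k < n → G.Adj v (g k) → k = z ∨ k = b + 1 ∨ k = n - 1 := by
    intro k hk vk
    by_contra hcon
    push Not at hcon
    by_cases hkb : k ≤ b
    · exact hz k hkb hcon.1 vk
    · exact h.thetaC hz0 hzb vz hz (w := k) (by omega) (by omega) vk
  have vx : G.Adj v (g (n - 1)) := by
    obtain ⟨k, hk, k1, k2, vk⟩ := h3 z (b + 1)
    rcases hQ k hk vk with rfl | rfl | rfl
    · exact absurd rfl k1
    · exact absurd rfl k2
    · exact vk
  have vy : G.Adj v (g (b + 1)) := by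
    obtain ⟨k, hk, k1, k2, vk⟩ := h3 z (n - 1)
    rcases hQ k hk vk with rfl | rfl | rfl
    · exact absurd rfl k1
    · exact vk
    · exact absurd rfl k2
  have hU : ∀ k, b < k → k < n → G.Adj u (g k) → n ≤ k + 2 ∧ k ≤ b + 2 := by
    intro k hk hkn uk
    constructor
    · by_contra hh
      exact h.thetaD hz0 hzb vz vx vy hk (by omega) uk
    · by_contra hh
      refine hm.thetaD (z := b - z) (t := n + b - k) (by omega) (by omega) ?_ ?_ ?_ (by omega)
        (by omega) ?_
      · rw [if_pos (by omega), show b - (b - z) = z by omega]; exact vz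
      · rw [if_neg (by omega), show n + b - (n - 1) = b + 1 by omega]; exact vy
      · rw [if_neg (by omega), show n + b - (b + 1) = n - 1 by omega]; exact vx
      · rw [if_neg (by omega), show n + b - (n + b - k) = k by omega]; exact uk
  have hz1 : z = 1 := by
    by_contra hh
    exact h.thetaE (by omega) hzb vz hz vx
  have hz2 : b = z + 1 := by
    by_contra hh
    refine hm.thetaE (z := b - z) (by omega) (by omega) ?_ ?_ ?_
    · rw [if_pos (by omega), show b - (b - z) = z by omega]; exact vz
    · intro k hk hkz
      rw [if_pos hk]
      exact hz _ (by omega) (by omega)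
    · rw [if_neg (by omega), show n + b - (n - 1) = b + 1 by omega]; exact vy
  have htt := hU t (by omega) (by omega) hut
  subst hz1
  obtain rfl : b = 2 := by omega
  obtain rfl : n = 6 := by omega
  obtain rfl : t = 4 := by omega
  refine ⟨rfl, rfl, ?_, ?_⟩
  · intro k hk
    constructor
    · intro uk
      by_cases k1 : k = 1
      · subst k1; exact absurd uk (h.usec 1 (by omega) (by omega))
      · by_cases k2 : 2 < k
        · have := hU k k2 hk uk
          omega
        · omega
    · rintro (rfl | rfl | rfl)
      · exact h.u0
      · exact h.ub
      · exact hut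
  · intro k hk
    constructor
    · intro vk
      have := hQ k hk vk
      omega
    · rintro (rfl | rfl | rfl)
      · exact vz
      · exact vy
      · exact vx

end Cfg

end Aux7

namespace Aux7

lemma exists_third {n : ℕ} {P : ZMod n → Prop} (h : 3 ≤ {m : ZMod n | P m}.ncard)
    (i j : ZMod n) : ∃ k, P k ∧ k ≠ i ∧ k ≠ j := by
  by_contra hcon
  push Not at hcon
  have hsub : {m : ZMod n | P m} ⊆ {i, j} := by
    intro k hk
    by_cases hki : k = i
    · exact Or.inl hki
    · exact Or.inr (hcon k hk hki)
  have h1 := Set.ncard_le_ncard hsub (Set.toFinite _)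
  have h2 := Set.ncard_insert_le i {j}
  rw [Set.ncard_singleton] at h2
  omega

lemma cast_inj_lt {n i j : ℕ} (hi : i < n) (hj : j < n) (h : (i : ZMod n) = (j : ZMod n)) :
    i = j := by
  rw [ZMod.natCast_eq_natCast_iff] at h
  exact Nat.ModEq.eq_of_lt_of_lt h hi hj

lemma pos_of (n : ℕ) [NeZero n] (x m : ZMod n) : ∃ k, k < n ∧ m = x + (k : ZMod n) :=
  ⟨(m - x).val, ZMod.val_lt _, by simp⟩

/-- two-wheels with non-adjacent centers are nested -/
lemma nested (G : SimpleGraph V) (hTheta : ¬ContainsTheta G)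
    (tri : ∀ x y z, G.Adj x y → G.Adj x z → ¬ G.Adj y z) (hCube : ¬ContainsCube G)
    (n : ℕ) (f : ZMod n → V) (u v : V) (hW : Is2WheelCfg G n f u v) (huv : ¬ G.Adj u v) :
    NestedCfg G n f u v := by
  classical
  obtain ⟨⟨hn, finj, fadj⟩, hne, hu, hv, hu3, hv3⟩ := hW
  have : NeZero n := ⟨by omega⟩
  have hnn : ((n : ℕ) : ZMod n) = 0 := ZMod.natCast_self n
  -- a neighbour of v which is not a neighbour of u
  obtain ⟨m, hvm, hum⟩ : ∃ m, G.Adj v (f m) ∧ ¬ G.Adj u (f m) := by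
    by_contra hcon
    push Not at hcon
    obtain ⟨a, va, -, -⟩ := exists_third hv3 0 0
    obtain ⟨b, vb, hba, -⟩ := exists_third hv3 a a
    obtain ⟨c, vc, hca, hcb⟩ := exists_third hv3 a b
    have hT : ∀ x, G.Adj v (f x) → Thru G {f x} u v := fun x vx =>
      ⟨f x, f x, hcon x vx, vx, rfl, rfl, Link.refl rfl⟩
    have hA : ∀ x y, G.Adj v (f x) → G.Adj v (f y) → y ≠ x →
        ∀ p ∈ ({f x} : Set V), ∀ q ∈ ({f y} : Set V), p ≠ q ∧ ¬ G.Adj p q := by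
      rintro x y vx vy hxy p rfl q rfl
      exact ⟨fun h => hxy (finj h).symm, tri _ _ _ vx vy⟩
    exact hTheta (theta_of_sets u v {f a} {f b} {f c} hne huv (hT a va) (hT b vb) (hT c vc)
      (hA a b va vb hba) (hA a c va vc hca) (hA b c vb vc hcb))
  -- the sector of u containing it
  obtain ⟨x₀, hux₀, -, -⟩ := exists_third hu3 0 0
  obtain ⟨k₀, hk₀n, hk₀⟩ := pos_of n x₀ m
  subst hk₀
  have hk₀0 : 0 < k₀ := by
    rcases Nat.eq_zero_or_pos k₀ with rfl | h
    · simp at hum; exact absurd hux₀ hum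
    · exact h
  let P : ℕ → Prop := fun k => G.Adj u (f (x₀ + (k : ZMod n)))
  have hP0 : P 0 := by simpa [P] using hux₀
  have hPn : P n := by simpa [P, hnn] using hux₀
  have hPk : ¬ P k₀ := hum
  obtain ⟨a, ha, hPa, hamax⟩ : ∃ a, a < k₀ ∧ P a ∧ ∀ i, a < i → i ≤ k₀ → ¬ P i := by
    refine ⟨Nat.findGreatest P k₀, ?_, Nat.findGreatest_spec (Nat.zero_le _) hP0,
      fun i h1 h2 => Nat.findGreatest_is_greatest h1 h2⟩
    have h1 : P (Nat.findGreatest P k₀) := Nat.findGreatest_spec (Nat.zero_le _) hP0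
    refine lt_of_le_of_ne (Nat.findGreatest_le _) (fun h => hPk ?_)
    rwa [h] at h1
  obtain ⟨c, hkc, hcn, hPc, hcmin⟩ : ∃ c, k₀ < c ∧ c ≤ n ∧ P c ∧ ∀ i, k₀ < i → i < c → ¬ P i := by
    have hex : ∃ c, k₀ < c ∧ P c := ⟨n, hk₀n, hPn⟩
    refine ⟨Nat.find hex, (Nat.find_spec hex).1, Nat.find_min' hex ⟨hk₀n, hPn⟩,
      (Nat.find_spec hex).2, fun i h1 h2 h3 => Nat.find_min hex h2 ⟨h1, h3⟩⟩
  set x : ZMod n := x₀ + (a : ZMod n) with hx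
  set b := c - a with hb
  have hxk : ∀ k : ℕ, x + (k : ZMod n) = x₀ + ((a + k : ℕ) : ZMod n) := by
    intro k; rw [hx]; push_cast; ring
  let g : ℕ → V := fun k => f (x + (k : ZMod n))
  have u0 : G.Adj u (g 0) := by
    simpa [g, hx] using hPa
  have ub : G.Adj u (g b) := by
    have : g b = f (x₀ + (c : ZMod n)) := by
      simp only [g]; rw [hxk, show a + b = c by omega]
    rw [this]; exact hPc
  have usec : ∀ i, 0 < i → i < b → ¬ G.Adj u (g i) := by
    intro i h1 h2 h3
    have h4 : P (a + i) := by
      simp only [g] at h3; rw [hxk] at h3; exact h3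
    by_cases h5 : a + i ≤ k₀
    · exact hamax (a + i) (by omega) h5 h4
    · exact hcmin (a + i) (by omega) (by omega) h4
  have vz : G.Adj v (g (k₀ - a)) := by
    have : g (k₀ - a) = f (x₀ + (k₀ : ZMod n)) := by
      simp only [g]; rw [hxk, show a + (k₀ - a) = k₀ by omega]
    rw [this]; exact hvm
  obtain ⟨t, hbt, htn, ut⟩ : ∃ t, b < t ∧ t < n ∧ G.Adj u (g t) := by
    obtain ⟨k, uk, k1, k2⟩ := exists_third hu3 x (x + (b : ZMod n))
    obtain ⟨t, ht, rfl⟩ := pos_of n x k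
    refine ⟨t, ?_, ht, uk⟩
    by_contra hh
    have ht0 : t ≠ 0 := by rintro rfl; simp at k1
    have htb : t ≠ b := by rintro rfl; exact k2 rfl
    exact usec t (by omega) (by omega) uk
  have gadj : ∀ i j, i < j → j < n → (G.Adj (g i) (g j) ↔ (j = i + 1 ∨ (i = 0 ∧ j = n - 1))) := by
    intro i j hij hj
    simp only [g]
    rw [fadj]
    constructor
    · rintro (h | h)
      · left
        have h' : ((j : ℕ) : ZMod n) = ((i + 1 : ℕ) : ZMod n) := by
          push_cast; linear_combination h
        exact cast_inj_lt hj (by omega) h'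
      · right
        have h' : ((i : ℕ) : ZMod n) = ((j + 1 : ℕ) : ZMod n) := by
          push_cast; linear_combination h
        by_cases hj' : j + 1 < n
        · have := cast_inj_lt (by omega) hj' h'
          omega
        · have hjn : j + 1 = n := by omega
          rw [hjn, hnn] at h'
          have := cast_inj_lt (n := n) (i := i) (j := 0) (by omega) (by omega) (by simpa using h')
          omega
    · rintro (rfl | ⟨rfl, rfl⟩)
      · left; push_cast; ring
      · right
        have : (((n - 1) + 1 : ℕ) : ZMod n) = 0 := by
          rw [show n - 1 + 1 = n by omega]; exact hnn
        push_cast at this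
        push_cast
        linear_combination -this
  have cfg : Cfg G n b g u v := by
    refine ⟨tri, hTheta, by omega, by omega, gadj, ?_, ?_, ?_, huv, hne, u0, ub, usec,
      ⟨t, hbt, htn, ut⟩, ⟨k₀ - a, by omega, by omega, vz⟩⟩
    · intro i j hij hj h
      have := cast_inj_lt (by omega) hj (add_left_cancel (finj h))
      omega
    · rintro i - rfl; exact hu ⟨_, rfl⟩
    · rintro i - rfl; exact hv ⟨_, rfl⟩
  by_cases hall : ∀ w, b < w → w < n → ¬ G.Adj v (g w)
  · refine ⟨x + (b : ZMod n), n - b, by omega, by omega, ?_, ?_⟩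
    · intro m' um'
      obtain ⟨k, hk, rfl⟩ := pos_of n x m'
      by_cases hkb : b ≤ k
      · refine ⟨k - b, by omega, ?_⟩
        rw [Nat.cast_sub hkb]; ring
      · have hk0 : k = 0 := by
          by_contra h0
          exact usec k (by omega) (by omega) um'
        subst hk0
        refine ⟨n - b, le_rfl, ?_⟩
        rw [Nat.cast_sub (show b ≤ n by omega), hnn]; push_cast; ring
    · intro m' vm'
      obtain ⟨k, hk, rfl⟩ := pos_of n x m'
      refine ⟨k, ?_, ?_⟩
      · by_contra hh
        exact hall k (by omega) hk vm'
      · rw [Nat.cast_sub (show b ≤ n by omega), hnn]; ring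
  · exfalso
    push Not at hall
    obtain ⟨w, hbw, hwn, vw⟩ := hall
    obtain ⟨rfl, -, hU, hV⟩ := cfg.cube hbw hwn vw (by
      intro i j
      obtain ⟨k, vk, k1, k2⟩ := exists_third hv3 (x + (i : ZMod n)) (x + (j : ZMod n))
      obtain ⟨k, hk, rfl⟩ := pos_of n x k
      exact ⟨k, hk, fun h => k1 (by rw [h]), fun h => k2 (by rw [h]), vk⟩)
    have hval : ∀ s : ZMod 6, f (x + s) = g s.val := by
      intro s
      simp only [g]
      rw [ZMod.natCast_zmod_val]
    refine hCube ⟨fun s => f (x + s), u, v, ⟨by omega, ?_, ?_⟩, ?_, ?_, huv, ?_, ?_⟩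
    · intro s s' h
      exact add_left_cancel (finj h)
    · intro i j
      dsimp only
      rw [fadj]
      constructor <;> rintro (h | h)
      · left; linear_combination h
      · right; linear_combination h
      · left; linear_combination h
      · right; linear_combination h
    · rintro ⟨s, rfl⟩; exact hu ⟨_, rfl⟩
    · rintro ⟨s, rfl⟩; exact hv ⟨_, rfl⟩
    · intro s
      dsimp only
      rw [hval, hU _ (ZMod.val_lt s)]
      revert s; decide
    · intro s
      dsimp only
      rw [hval, hV _ (ZMod.val_lt s)]
      revert s; decide

end Aux7

/-- Every (theta, triangle, cube)-free graph belongs to the class 𝒞. -/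
theorem statement7 (G : SimpleGraph V)
    (hTheta : ¬ContainsTheta G) (hTri : G.CliqueFree 3) (hCube : ¬ContainsCube G) :
    InClassC G := by
  have tri : ∀ x y z, G.Adj x y → G.Adj x z → ¬ G.Adj y z := by
    intro x y z h1 h2 h3
    exact hTri {x, y, z} (SimpleGraph.is3Clique_triple_iff.2 ⟨h1, h2, h3⟩)
  refine ⟨hTheta, ?_, ?_, ?_, ?_⟩
  · rintro ⟨a₁, b₁, a₂, b₂, a₃, b₃, p₁, p₂, p₃, -, -, ⟨h1, h2, h3⟩, -⟩
    exact tri _ _ _ h1 h3 h2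
  · rintro ⟨a, b₁, b₂, b₃, p₁, p₂, p₃, -, -, -, ⟨h1, h2, h3⟩, -⟩
    exact tri _ _ _ h1 h3 h2
  · rintro ⟨n, f, u, ⟨hn, finj, fadj⟩, hu, i, j, -, -, -, -, -, -, h⟩
    exact tri u (f i) (f (i + 1)) ((h _).2 (Or.inl rfl)) ((h _).2 (Or.inr (Or.inl rfl)))
      ((fadj _ _).2 (Or.inl rfl))
  · intro n f u v hW huv
    exact Or.inl (Aux7.nested G hTheta tri hCube n f u v hW huv)
end

section
/- If G is a (theta, prism, pyramid, even wheel, square)-free graph, then G belongs to the class 𝒞, i.e., G is (theta, prism, pyramid, butterfly)-free and every 2-wheel in G with non-adjacent centers is either a nested wheel or a cousin wheel. -/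
open SimpleGraph

variable {V : Type} [Fintype V] [DecidableEq V]

set_option linter.unusedSectionVars false

structure HoleSeq (G : SimpleGraph V) (n : ℕ) (h : ℕ → V) : Prop where
  four : 4 ≤ n
  inj : ∀ i j, i < n → j < n → h i = h j → i = j
  adj : ∀ i j, i < n → j < n → (G.Adj (h i) (h j) ↔
    (i + 1 = j ∨ j + 1 = i ∨ (i = 0 ∧ j + 1 = n) ∨ (j = 0 ∧ i + 1 = n)))

def IndPath (G : SimpleGraph V) (a b : V) (S : Set V) (l : ℕ) : Prop :=
  ∃ p : G.Walk a b, IsInducedPathW G p ∧ p.length = l ∧ ∀ x, x ∈ p.support ↔ x ∈ S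

def arcS (h : ℕ → V) (i j : ℕ) : Set V := {x | ∃ k, i ≤ k ∧ k ≤ j ∧ x = h k}

theorem IndPath.single (G : SimpleGraph V) (a : V) : IndPath G a a {a} 0 := by
  refine ⟨SimpleGraph.Walk.nil, ⟨by simp, ?_⟩, rfl, by simp⟩
  intro u v hu hv huv
  simp at hu hv
  subst hu hv
  exact absurd huv (G.loopless.irrefl _)

theorem IndPath.cons {G : SimpleGraph V} {a b : V} {S : Set V} {l : ℕ} (c : V)
    (hp : IndPath G a b S l) (hca : G.Adj c a) (hc : c ∉ S)
    (hn : ∀ x ∈ S, G.Adj c x → x = a) : IndPath G c b (insert c S) (l + 1) := by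
  obtain ⟨p, ⟨h1, h2⟩, h3, h4⟩ := hp
  refine ⟨SimpleGraph.Walk.cons hca p, ⟨?_, ?_⟩, by simp [h3], by simp [h4]⟩
  · rw [SimpleGraph.Walk.cons_isPath_iff]
    exact ⟨h1, fun h => hc ((h4 c).1 h)⟩
  · intro u v hu hv huv
    simp only [SimpleGraph.Walk.support_cons, List.mem_cons] at hu hv
    simp only [SimpleGraph.Walk.toSubgraph, SimpleGraph.Subgraph.sup_adj,
      SimpleGraph.subgraphOfAdj_adj]
    rcases hu with rfl | hu
    · rcases hv with rfl | hv
      · exact absurd huv (G.loopless.irrefl _)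
      · left
        rw [hn v ((h4 v).1 hv) huv]
    · rcases hv with rfl | hv
      · left
        rw [hn u ((h4 u).1 hu) huv.symm]
        exact Sym2.eq_swap
      · right
        exact h2 u v hu hv huv

theorem IndPath.rev {G : SimpleGraph V} {a b : V} {S : Set V} {l : ℕ}
    (hp : IndPath G a b S l) : IndPath G b a S l := by
  obtain ⟨p, ⟨h1, h2⟩, h3, h4⟩ := hp
  refine ⟨p.reverse, ⟨h1.reverse, ?_⟩, by simp [h3], by simp [h4]⟩
  intro u v hu hv huv
  simp only [SimpleGraph.Walk.support_reverse, List.mem_reverse] at hu hv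
  rw [SimpleGraph.Walk.toSubgraph_reverse]
  exact h2 u v hu hv huv

theorem IndPath.congr {G : SimpleGraph V} {a b : V} {S T : Set V} {l m : ℕ}
    (hp : IndPath G a b S l) (h : S = T) (hl : l = m) : IndPath G a b T m := by
  subst h; subst hl; exact hp

/-- arcs of a hole, decreasing start -/
theorem HoleSeq.arc {G : SimpleGraph V} {n : ℕ} {h : ℕ → V} (H : HoleSeq G n h) (j t : ℕ)
    (ht : t ≤ j) (hj : j < n) (hfull : ¬ (j - t = 0 ∧ j + 1 = n)) :
    IndPath G (h (j - t)) (h j) (arcS h (j - t) j) t := by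
  induction t with
  | zero =>
    refine (IndPath.single G (h j)).congr ?_ rfl
    ext x
    simp only [Set.mem_singleton_iff, arcS, Set.mem_ofPred_eq]
    constructor
    · rintro rfl; exact ⟨j, by omega, by omega, rfl⟩
    · rintro ⟨k, h1, h2, rfl⟩
      rw [show k = j by omega]
  | succ t ih =>
    refine ((ih (by omega) (by omega)).cons (h (j - (t + 1))) ?_ ?_ ?_).congr ?_ rfl
    · rw [H.adj _ _ (by omega) (by omega)]; omega
    · rintro ⟨k, h1, h2, h3⟩
      have := H.inj _ _ (by omega) (by omega) h3
      omega
    · rintro x ⟨k, h1, h2, rfl⟩ h4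
      rw [H.adj _ _ (by omega) (by omega)] at h4
      rw [show k = j - t by omega]
    · ext x
      simp only [Set.mem_insert_iff, arcS, Set.mem_ofPred_eq]
      constructor
      · rintro (rfl | ⟨k, h1, h2, rfl⟩)
        · exact ⟨_, by omega, by omega, rfl⟩
        · exact ⟨k, by omega, by omega, rfl⟩
      · rintro ⟨k, h1, h2, rfl⟩
        by_cases hk : k = j - (t + 1)
        · left; rw [hk]
        · right; exact ⟨k, by omega, by omega, rfl⟩

theorem HoleSeq.arcUp {G : SimpleGraph V} {n : ℕ} {h : ℕ → V} (H : HoleSeq G n h) (i j : ℕ)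
    (ht : i ≤ j) (hj : j < n) (hfull : ¬ (i = 0 ∧ j + 1 = n)) :
    IndPath G (h i) (h j) (arcS h i j) (j - i) := by
  have := H.arc j (j - i) (by omega) hj (by omega)
  rwa [show j - (j - i) = i by omega] at this

theorem mkTheta {G : SimpleGraph V} {a b : V} {S₁ S₂ S₃ : Set V} {l₁ l₂ l₃ : ℕ}
    (p₁ : IndPath G a b S₁ l₁) (p₂ : IndPath G a b S₂ l₂) (p₃ : IndPath G a b S₃ l₃)
    (h₁ : 2 ≤ l₁) (h₂ : 2 ≤ l₂) (h₃ : 2 ≤ l₃)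
    (h12 : ∀ x ∈ S₁, ∀ y ∈ S₂, x ≠ a → x ≠ b → y ≠ a → y ≠ b → x ≠ y ∧ ¬ G.Adj x y)
    (h13 : ∀ x ∈ S₁, ∀ y ∈ S₃, x ≠ a → x ≠ b → y ≠ a → y ≠ b → x ≠ y ∧ ¬ G.Adj x y)
    (h23 : ∀ x ∈ S₂, ∀ y ∈ S₃, x ≠ a → x ≠ b → y ≠ a → y ≠ b → x ≠ y ∧ ¬ G.Adj x y) :
    ContainsTheta G := by
  obtain ⟨q₁, i₁, rfl, s₁⟩ := p₁
  obtain ⟨q₂, i₂, rfl, s₂⟩ := p₂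
  obtain ⟨q₃, i₃, rfl, s₃⟩ := p₃
  refine ⟨a, b, q₁, q₂, q₃, ⟨i₁, i₂, i₃⟩, ⟨h₁, h₂, h₃⟩, ?_, ?_⟩
  · intro w hw
    simp only [s₁, s₂, s₃] at hw
    by_contra hc
    push Not at hc
    rcases hw with ⟨x, y⟩ | ⟨x, y⟩ | ⟨x, y⟩
    · exact (h12 _ x _ y hc.1 hc.2 hc.1 hc.2).1 rfl
    · exact (h13 _ x _ y hc.1 hc.2 hc.1 hc.2).1 rfl
    · exact (h23 _ x _ y hc.1 hc.2 hc.1 hc.2).1 rfl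
  · intro u w a1 a2 a3 a4 hw
    simp only [s₁, s₂, s₃] at hw
    rcases hw with ⟨x, y⟩ | ⟨x, y⟩ | ⟨x, y⟩
    · exact (h12 _ x _ y a1 a2 a3 a4).2
    · exact (h13 _ x _ y a1 a2 a3 a4).2
    · exact (h23 _ x _ y a1 a2 a3 a4).2

theorem mkPyramid {G : SimpleGraph V} {a b₁ b₂ b₃ : V} {S₁ S₂ S₃ : Set V} {l₁ l₂ l₃ : ℕ}
    (p₁ : IndPath G a b₁ S₁ l₁) (p₂ : IndPath G a b₂ S₂ l₂) (p₃ : IndPath G a b₃ S₃ l₃)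
    (h₁ : 1 ≤ l₁) (h₂ : 1 ≤ l₂) (h₃ : 2 ≤ l₃) (hl : 2 ≤ l₁ ∨ 2 ≤ l₂)
    (t12 : G.Adj b₁ b₂) (t23 : G.Adj b₂ b₃) (t13 : G.Adj b₁ b₃)
    (h12 : ∀ x ∈ S₁, ∀ y ∈ S₂, x ≠ a → y ≠ a → x ≠ y ∧ (G.Adj x y → x = b₁ ∧ y = b₂))
    (h13 : ∀ x ∈ S₁, ∀ y ∈ S₃, x ≠ a → y ≠ a → x ≠ y ∧ (G.Adj x y → x = b₁ ∧ y = b₃))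
    (h23 : ∀ x ∈ S₂, ∀ y ∈ S₃, x ≠ a → y ≠ a → x ≠ y ∧ (G.Adj x y → x = b₂ ∧ y = b₃)) :
    ContainsPyramid G := by
  obtain ⟨q₁, i₁, rfl, s₁⟩ := p₁
  obtain ⟨q₂, i₂, rfl, s₂⟩ := p₂
  obtain ⟨q₃, i₃, rfl, s₃⟩ := p₃
  refine ⟨a, b₁, b₂, b₃, q₁, q₂, q₃, ⟨i₁, i₂, i₃⟩, ⟨h₁, h₂, by omega⟩, by omega,
    ⟨t12, t23, t13⟩, ?_, ?_, ?_, ?_⟩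
  · intro w hw
    simp only [s₁, s₂, s₃] at hw
    by_contra hc
    rcases hw with ⟨x, y⟩ | ⟨x, y⟩ | ⟨x, y⟩
    · exact (h12 _ x _ y hc hc).1 rfl
    · exact (h13 _ x _ y hc hc).1 rfl
    · exact (h23 _ x _ y hc hc).1 rfl
  · intro u w x y a1 a2
    exact (h12 _ ((s₁ _).1 x) _ ((s₂ _).1 y) a1 a2).2
  · intro u w x y a1 a2
    exact (h13 _ ((s₁ _).1 x) _ ((s₃ _).1 y) a1 a2).2
  · intro u w x y a1 a2
    exact (h23 _ ((s₂ _).1 x) _ ((s₃ _).1 y) a1 a2).2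


theorem HoleSeq.adj' {G : SimpleGraph V} {n : ℕ} {h : ℕ → V} (H : HoleSeq G n h) :
    ∀ i j, i < n → j < n → G.Adj (h i) (h j) →
    (i + 1 = j ∨ j + 1 = i ∨ (i = 0 ∧ j + 1 = n) ∨ (j = 0 ∧ i + 1 = n)) :=
  fun i j hi hj ha => (H.adj i j hi hj).1 ha

theorem arc_ball {h : ℕ → V} {i j : ℕ} {P : V → Prop} :
    (∀ x ∈ arcS h i j, P x) ↔ ∀ k, i ≤ k → k ≤ j → P (h k) := by
  constructor
  · intro H k h1 h2; exact H _ ⟨k, h1, h2, rfl⟩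
  · rintro H x ⟨k, h1, h2, rfl⟩; exact H k h1 h2

theorem mem_arcS {h : ℕ → V} {i j : ℕ} {x : V} :
    x ∈ arcS h i j ↔ ∃ k, i ≤ k ∧ k ≤ j ∧ x = h k := Iff.rfl

theorem lemma0 {G : SimpleGraph V} {n : ℕ} {h : ℕ → V} (H : HoleSeq G n h) {v : V}
    (hv : ∀ i, i < n → h i ≠ v) (p : ℕ) (hp : 2 ≤ p) (hp' : p + 3 ≤ n)
    (hN : ∀ j, j < n → (G.Adj v (h j) ↔ j = 0 ∨ j = p ∨ j = p + 1)) : ContainsPyramid G := by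
  have hA := H.adj'
  have hI := H.inj
  have hS := fun a b => G.adj_comm a b
  have P1 := H.arcUp 0 p (by omega) (by omega) (by omega)
  have P2 := ((H.arcUp (p + 1) (n - 1) (by omega) (by omega) (by omega)).rev).cons (h 0)
    (by rw [H.adj _ _ (by omega) (by omega)]; omega) (by grind [mem_arcS]) (by rw [arc_ball]; grind)
  have P3 := (IndPath.single G v).cons (h 0) (by grind) (by grind) (by grind)
  refine mkPyramid P3 P1 P2 (by omega) (by omega) (by omega) (by omega) (by grind)
    (by rw [H.adj _ _ (by omega) (by omega)]; omega) (by grind) ?_ ?_ ?_ <;> clear P1 P2 P3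
  · simp only [Set.forall_mem_insert, arc_ball, Set.mem_singleton_iff, forall_eq]
    grind
  · simp only [Set.forall_mem_insert, arc_ball, Set.mem_singleton_iff, forall_eq]
    grind
  · simp only [Set.forall_mem_insert, arc_ball, Set.mem_singleton_iff, forall_eq]
    grind


theorem IndPath.cons' {G : SimpleGraph V} {a b : V} {S : Set V} {l : ℕ} (hp : IndPath G a b S l)
    (c : V) (hca : G.Adj c b) (hc : c ∉ S)
    (hn : ∀ x ∈ S, G.Adj c x → x = b) : IndPath G a c (insert c S) (l + 1) :=
  (hp.rev.cons c hca hc hn).rev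

theorem HoleSeq.rot {G : SimpleGraph V} {n : ℕ} {h : ℕ → V} (H : HoleSeq G n h) (k : ℕ)
    (hk : k < n) : HoleSeq G n (fun i => if i + k < n then h (i + k) else h (i + k - n)) := by
  have h4 := H.four
  refine ⟨H.four, ?_, ?_⟩
  · intro i j hi hj hij
    split_ifs at hij <;> have := H.inj _ _ (by omega) (by omega) hij <;> omega
  · intro i j hi hj
    split_ifs <;> rw [H.adj _ _ (by omega) (by omega)] <;> omega

theorem HoleSeq.rv {G : SimpleGraph V} {n : ℕ} {h : ℕ → V} (H : HoleSeq G n h) :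
    HoleSeq G n (fun i => h (n - 1 - i)) := by
  have h4 := H.four
  refine ⟨H.four, ?_, ?_⟩
  · intro i j hi hj hij
    have := H.inj _ _ (by omega) (by omega) hij
    omega
  · intro i j hi hj
    rw [H.adj _ _ (by omega) (by omega)]; omega

/-- lemma0 with arbitrary apex position `c` -/
theorem lemma0' {G : SimpleGraph V} {n : ℕ} {h : ℕ → V} (H : HoleSeq G n h) {v : V}
    (hv : ∀ i, i < n → h i ≠ v) (c p : ℕ) (hc : c < n) (hp : 2 ≤ p) (hp' : p + 3 ≤ n)
    (hN : ∀ j, j < n → (G.Adj v (h j) ↔ j = c ∨ j = p + c ∨ j + n = p + c ∨ j = p + 1 + c ∨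
      j + n = p + 1 + c)) :
    ContainsPyramid G := by
  refine lemma0 (H.rot c hc) (v := v) ?_ p hp hp' ?_
  · intro i hi
    split_ifs <;> exact hv _ (by omega)
  · intro j hj
    split_ifs <;> rw [hN _ (by omega)] <;> omega

theorem exPathUp {G : SimpleGraph V} {n : ℕ} {h : ℕ → V} (H : HoleSeq G n h) {u v : V}
    (hu : ∀ i, i < n → h i ≠ u) (hv : ∀ i, i < n → h i ≠ v) (huv : u ≠ v) (hna : ¬ G.Adj u v)
    (t : ℕ) : ∀ (a b : ℕ), b - a ≤ t → 0 < a → a ≤ b → b < n → G.Adj u (h a) → G.Adj v (h b) →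
    ∃ lo hi L, a ≤ lo ∧ hi ≤ b ∧ 2 ≤ L ∧ IndPath G u v (insert u (insert v (arcS h lo hi))) L := by
  have hI := H.inj
  have hS := fun a b => G.adj_comm a b
  induction t with
  | zero =>
    intro a b h1 h2 h3 h4 h5 h6
    obtain rfl : a = b := by omega
    refine ⟨a, a, _, le_rfl, le_rfl, ?_, (((H.arcUp a a le_rfl h4 (by have := H.four; omega)).rev.cons v h6
      (by grind [mem_arcS]) (by rw [arc_ball]; grind)).rev.cons u h5 (by grind [mem_arcS])
      (by simp only [Set.forall_mem_insert, arc_ball]; grind))⟩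
    omega
  | succ t ih =>
    intro a b h1 h2 h3 h4 h5 h6
    by_cases c1 : ∃ c, a < c ∧ c ≤ b ∧ G.Adj u (h c)
    · obtain ⟨c, c1, c2, c3⟩ := c1
      obtain ⟨lo, hi, L, q1, q2, q3, q4⟩ := ih c b (by omega) (by omega) (by omega) h4 c3 h6
      exact ⟨lo, hi, L, by omega, q2, q3, q4⟩
    by_cases c2 : ∃ c, a ≤ c ∧ c < b ∧ G.Adj v (h c)
    · obtain ⟨c, c1, c2, c3⟩ := c2
      obtain ⟨lo, hi, L, q1, q2, q3, q4⟩ := ih a c (by omega) (by omega) (by omega) (by omega) h5 c3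
      exact ⟨lo, hi, L, by omega, by omega, q3, q4⟩
    push Not at c1 c2
    clear ih
    refine ⟨a, b, _, le_rfl, le_rfl, ?_, (((H.arcUp a b h3 h4 (by omega)).cons' v h6
      (by rintro ⟨k, k1, k2, k3⟩; exact hv k (by omega) k3.symm) ?_).cons u h5 ?_ ?_)⟩
    · omega
    · rw [arc_ball]
      intro k k1 k2 k3
      by_contra hk
      exact c2 k k1 (lt_of_le_of_ne k2 (fun e => hk (by rw [e]))) k3
    · rintro (k | ⟨k, k1, k2, k3⟩)
      · exact huv k
      · exact hu k (by omega) k3.symm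
    · simp only [Set.forall_mem_insert, arc_ball]
      refine ⟨fun hh => absurd hh hna, ?_⟩
      intro k k1 k2 k3
      by_contra hk
      exact c1 k (lt_of_le_of_ne k1 (fun e => hk (by rw [e]))) k2 k3

theorem exPath {G : SimpleGraph V} {n : ℕ} {h : ℕ → V} (H : HoleSeq G n h) {u v : V}
    (hu : ∀ i, i < n → h i ≠ u) (hv : ∀ i, i < n → h i ≠ v) (huv : u ≠ v) (hna : ¬ G.Adj u v)
    (l m a b : ℕ) (hl : 0 < l) (hm : m < n) (ha : l ≤ a) (ha' : a ≤ m) (hb : l ≤ b) (hb' : b ≤ m)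
    (hua : G.Adj u (h a)) (hvb : G.Adj v (h b)) :
    ∃ lo hi L, l ≤ lo ∧ hi ≤ m ∧ 2 ≤ L ∧ IndPath G u v (insert u (insert v (arcS h lo hi))) L := by
  rcases le_total a b with hab | hab
  · obtain ⟨lo, hi, L, q1, q2, q3, q4⟩ := exPathUp H hu hv huv hna (b - a) a b le_rfl (by omega) hab
      (by omega) hua hvb
    exact ⟨lo, hi, L, by omega, by omega, q3, q4⟩
  · obtain ⟨lo, hi, L, q1, q2, q3, q4⟩ := exPathUp H hv hu huv.symm (fun h => hna h.symm) (a - b) b a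
      le_rfl (by omega) hab (by omega) hvb hua
    exact ⟨lo, hi, L, by omega, by omega, q3, q4.rev.congr (Set.insert_comm _ _ _) rfl⟩

theorem firstLast (P : ℕ → Prop) (d m : ℕ) (hm : m ≤ d) (hP : P m) :
    ∃ i j, i ≤ m ∧ m ≤ j ∧ j ≤ d ∧ P i ∧ P j ∧ ∀ k, k ≤ d → P k → i ≤ k ∧ k ≤ j := by
  classical
  have hex : ∃ m, P m := ⟨m, hP⟩
  refine ⟨Nat.find hex, Nat.findGreatest P d, Nat.find_min' hex hP, Nat.le_findGreatest hm hP,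
    Nat.findGreatest_le d, Nat.find_spec hex, Nat.findGreatest_spec hm hP, ?_⟩
  intro k hk hPk
  exact ⟨Nat.find_min' hex hPk, Nat.le_findGreatest hk hPk⟩


/-- adjacency of the coded configuration: rim positions `< n`, first centre `n`, second `n+1` -/
def EE (n : ℕ) (U W : ℕ → Prop) (i j : ℕ) : Prop :=
  (i < n ∧ j < n ∧ (i + 1 = j ∨ j + 1 = i ∨ (i = 0 ∧ j + 1 = n) ∨ (j = 0 ∧ i + 1 = n))) ∨
  (i = n ∧ j < n ∧ U j) ∨ (j = n ∧ i < n ∧ U i) ∨ (i = n + 1 ∧ j < n ∧ W j) ∨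
  (j = n + 1 ∧ i < n ∧ W i)

structure Cd (G : SimpleGraph V) (n : ℕ) (g : ℕ → V) (U W : ℕ → Prop) : Prop where
  four : 4 ≤ n
  inj : ∀ i j, i < n + 2 → j < n + 2 → g i = g j → i = j
  adj : ∀ i j, i < n + 2 → j < n + 2 → (G.Adj (g i) (g j) ↔ EE n U W i j)

def IP (G : SimpleGraph V) (n : ℕ) (g : ℕ → V) (a b : ℕ) (S : ℕ → Prop) (l : ℕ) : Prop :=
  a < n + 2 ∧ b < n + 2 ∧ (∀ i, S i → i < n + 2) ∧ IndPath G (g a) (g b) {x | ∃ i, S i ∧ x = g i} l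

theorem Cd.mk' {G : SimpleGraph V} {n : ℕ} {h : ℕ → V} (H : HoleSeq G n h) {u v : V}
    (hu : ∀ i, i < n → h i ≠ u) (hv : ∀ i, i < n → h i ≠ v) (huv : u ≠ v) (hna : ¬ G.Adj u v) :
    Cd G n (fun i => if i < n then h i else if i = n then u else v)
      (fun i => G.Adj u (h i)) (fun i => G.Adj v (h i)) := by
  refine ⟨H.four, ?_, ?_⟩
  · intro i j hi hj hij
    have h1 := H.inj i j
    have h2 := hu i
    have h3 := hu j
    have h4 := hv i
    have h5 := hv j
    split_ifs at hij <;> grind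
  · intro i j hi hj
    have h1 := H.adj i j
    have h2 := G.adj_comm u (h i)
    have h3 := G.adj_comm v (h i)
    have h4 := G.adj_comm u v
    have h5 := G.loopless.irrefl u
    have h6 := G.loopless.irrefl v
    unfold EE
    split_ifs <;> grind

theorem Cd.hole {G : SimpleGraph V} {n : ℕ} {g : ℕ → V} {U W : ℕ → Prop} (H : Cd G n g U W) :
    HoleSeq G n g := by
  refine ⟨H.four, fun i j hi hj => H.inj i j (by omega) (by omega), fun i j hi hj => ?_⟩
  rw [H.adj i j (by omega) (by omega)]
  unfold EE
  grind

theorem Cd.arc {G : SimpleGraph V} {n : ℕ} {g : ℕ → V} {U W : ℕ → Prop} (H : Cd G n g U W) (i j : ℕ)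
    (ht : i ≤ j) (hj : j < n) (hfull : ¬ (i = 0 ∧ j + 1 = n)) :
    IP G n g i j (fun k => i ≤ k ∧ k ≤ j) (j - i) := by
  refine ⟨by omega, by omega, fun k hk => by omega, (H.hole.arcUp i j ht hj hfull).congr ?_ rfl⟩
  ext x
  simp [mem_arcS, and_assoc]

theorem Cd.single {G : SimpleGraph V} {n : ℕ} {g : ℕ → V} {U W : ℕ → Prop} (_H : Cd G n g U W) (i : ℕ)
    (hi : i < n + 2) : IP G n g i i (fun k => k = i) 0 := by
  refine ⟨by omega, by omega, fun k hk => by omega, (IndPath.single G (g i)).congr ?_ rfl⟩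
  ext x
  simp

theorem Cd.cons {G : SimpleGraph V} {n : ℕ} {g : ℕ → V} {U W : ℕ → Prop} (H : Cd G n g U W)
    {a b l : ℕ} {S : ℕ → Prop} (c : ℕ) (hc : c < n + 2) (P : IP G n g a b S l)
    (hca : EE n U W c a) (hS : ¬ S c) (hn : ∀ i, S i → EE n U W c i → i = a) :
    IP G n g c b (fun k => k = c ∨ S k) (l + 1) := by
  obtain ⟨p1, p2, p3, p4⟩ := P
  refine ⟨hc, p2, fun i hi => ?_, ?_⟩
  · rcases hi with hi | hi
    · omega
    · exact p3 i hi
  · refine (p4.cons (g c) ((H.adj _ _ hc p1).2 hca) ?_ ?_).congr ?_ rfl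
    · rintro ⟨i, i1, i2⟩
      rw [H.inj _ _ hc (p3 _ i1) i2] at hS
      exact hS i1
    · rintro x ⟨i, i1, rfl⟩ hx
      rw [hn i i1 ((H.adj _ _ hc (p3 _ i1)).1 hx)]
    · ext x
      simp only [Set.mem_insert_iff, Set.mem_ofPred_eq]
      grind

theorem IP.rev {G : SimpleGraph V} {n : ℕ} {g : ℕ → V} {a b l : ℕ} {S : ℕ → Prop}
    (P : IP G n g a b S l) : IP G n g b a S l := ⟨P.2.1, P.1, P.2.2.1, P.2.2.2.rev⟩

theorem Cd.theta {G : SimpleGraph V} {n : ℕ} {g : ℕ → V} {U W : ℕ → Prop} (H : Cd G n g U W)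
    {a b : ℕ} {S₁ S₂ S₃ : ℕ → Prop} {l₁ l₂ l₃ : ℕ}
    (p₁ : IP G n g a b S₁ l₁) (p₂ : IP G n g a b S₂ l₂) (p₃ : IP G n g a b S₃ l₃)
    (h₁ : 2 ≤ l₁) (h₂ : 2 ≤ l₂) (h₃ : 2 ≤ l₃)
    (h12 : ∀ x y, S₁ x → S₂ y → x ≠ a → x ≠ b → y ≠ a → y ≠ b → x ≠ y ∧ ¬ EE n U W x y)
    (h13 : ∀ x y, S₁ x → S₃ y → x ≠ a → x ≠ b → y ≠ a → y ≠ b → x ≠ y ∧ ¬ EE n U W x y)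
    (h23 : ∀ x y, S₂ x → S₃ y → x ≠ a → x ≠ b → y ≠ a → y ≠ b → x ≠ y ∧ ¬ EE n U W x y) :
    ContainsTheta G := by
  have key : ∀ S T : ℕ → Prop, (∀ i, S i → i < n + 2) → (∀ i, T i → i < n + 2) →
      (∀ x y, S x → T y → x ≠ a → x ≠ b → y ≠ a → y ≠ b → x ≠ y ∧ ¬ EE n U W x y) →
      ∀ x ∈ {x | ∃ i, S i ∧ x = g i}, ∀ y ∈ {x | ∃ i, T i ∧ x = g i},
        x ≠ g a → x ≠ g b → y ≠ g a → y ≠ g b → x ≠ y ∧ ¬ G.Adj x y := by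
    rintro S T hS hT hh x ⟨i, i1, rfl⟩ y ⟨j, j1, rfl⟩ e1 e2 e3 e4
    have := hh i j i1 j1 (fun e => e1 (by rw [e])) (fun e => e2 (by rw [e])) (fun e => e3 (by rw [e]))
      (fun e => e4 (by rw [e]))
    exact ⟨fun e => this.1 (H.inj _ _ (hS _ i1) (hT _ j1) e),
      fun e => this.2 ((H.adj _ _ (hS _ i1) (hT _ j1)).1 e)⟩
  exact mkTheta p₁.2.2.2 p₂.2.2.2 p₃.2.2.2 h₁ h₂ h₃ (key _ _ p₁.2.2.1 p₂.2.2.1 h12)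
    (key _ _ p₁.2.2.1 p₃.2.2.1 h13) (key _ _ p₂.2.2.1 p₃.2.2.1 h23)

theorem Cd.pyramid {G : SimpleGraph V} {n : ℕ} {g : ℕ → V} {U W : ℕ → Prop} (H : Cd G n g U W)
    {a b₁ b₂ b₃ : ℕ} {S₁ S₂ S₃ : ℕ → Prop} {l₁ l₂ l₃ : ℕ}
    (p₁ : IP G n g a b₁ S₁ l₁) (p₂ : IP G n g a b₂ S₂ l₂) (p₃ : IP G n g a b₃ S₃ l₃)
    (h₁ : 1 ≤ l₁) (h₂ : 1 ≤ l₂) (h₃ : 2 ≤ l₃) (hl : 2 ≤ l₁ ∨ 2 ≤ l₂)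
    (t12 : EE n U W b₁ b₂) (t23 : EE n U W b₂ b₃) (t13 : EE n U W b₁ b₃)
    (h12 : ∀ x y, S₁ x → S₂ y → x ≠ a → y ≠ a → x ≠ y ∧ (EE n U W x y → x = b₁ ∧ y = b₂))
    (h13 : ∀ x y, S₁ x → S₃ y → x ≠ a → y ≠ a → x ≠ y ∧ (EE n U W x y → x = b₁ ∧ y = b₃))
    (h23 : ∀ x y, S₂ x → S₃ y → x ≠ a → y ≠ a → x ≠ y ∧ (EE n U W x y → x = b₂ ∧ y = b₃)) :
    ContainsPyramid G := by
  have key : ∀ (S T : ℕ → Prop) (b b' : ℕ), (∀ i, S i → i < n + 2) → (∀ i, T i → i < n + 2) →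
      (∀ x y, S x → T y → x ≠ a → y ≠ a → x ≠ y ∧ (EE n U W x y → x = b ∧ y = b')) →
      ∀ x ∈ {x | ∃ i, S i ∧ x = g i}, ∀ y ∈ {x | ∃ i, T i ∧ x = g i},
        x ≠ g a → y ≠ g a → x ≠ y ∧ (G.Adj x y → x = g b ∧ y = g b') := by
    rintro S T b b' hS hT hh x ⟨i, i1, rfl⟩ y ⟨j, j1, rfl⟩ e1 e3
    have := hh i j i1 j1 (fun e => e1 (by rw [e])) (fun e => e3 (by rw [e]))
    refine ⟨fun e => this.1 (H.inj _ _ (hS _ i1) (hT _ j1) e), fun e => ?_⟩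
    obtain ⟨r1, r2⟩ := this.2 ((H.adj _ _ (hS _ i1) (hT _ j1)).1 e)
    rw [r1, r2]; exact ⟨rfl, rfl⟩
  exact mkPyramid p₁.2.2.2 p₂.2.2.2 p₃.2.2.2 h₁ h₂ h₃ hl
    ((H.adj _ _ p₁.2.1 p₂.2.1).2 t12) ((H.adj _ _ p₂.2.1 p₃.2.1).2 t23)
    ((H.adj _ _ p₁.2.1 p₃.2.1).2 t13) (key _ _ _ _ p₁.2.2.1 p₂.2.2.1 h12)
    (key _ _ _ _ p₁.2.2.1 p₃.2.2.1 h13) (key _ _ _ _ p₂.2.2.1 p₃.2.2.1 h23)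

theorem Cd.exPath {G : SimpleGraph V} {n : ℕ} {g : ℕ → V} {U W : ℕ → Prop} (H : Cd G n g U W)
    (l m a b : ℕ) (hl : 0 < l) (hm : m < n) (ha : l ≤ a) (ha' : a ≤ m) (hb : l ≤ b) (hb' : b ≤ m)
    (hua : U a) (hvb : W b) :
    ∃ lo hi L, l ≤ lo ∧ hi ≤ m ∧ 2 ≤ L ∧
      IP G n g n (n + 1) (fun i => i = n ∨ i = n + 1 ∨ (lo ≤ i ∧ i ≤ hi)) L := by
  obtain ⟨lo, hi, L, q1, q2, q3, q4⟩ := _root_.exPath H.hole (u := g n) (v := g (n + 1))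
    (fun i hi e => by have := H.inj _ _ (by omega) (by omega) e; omega)
    (fun i hi e => by have := H.inj _ _ (by omega) (by omega) e; omega)
    (fun e => by have := H.inj _ _ (by omega) (by omega) e; omega)
    (by rw [H.adj _ _ (by omega) (by omega)]; unfold EE; omega)
    l m a b hl hm ha ha' hb hb'
    (by rw [H.adj _ _ (by omega) (by omega)]; unfold EE; grind)
    (by rw [H.adj _ _ (by omega) (by omega)]; unfold EE; grind)
  refine ⟨lo, hi, L, q1, q2, q3, by omega, by omega, fun i hi => by omega, q4.congr ?_ rfl⟩
  ext x
  simp only [Set.mem_insert_iff, mem_arcS, Set.mem_ofPred_eq]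
  grind


theorem sectorLemma {G : SimpleGraph V} (hTheta : ¬ContainsTheta G) (hPyr : ¬ContainsPyramid G)
    {n : ℕ} {g : ℕ → V} {U W : ℕ → Prop} (H : Cd G n g U W)
    (d m a b : ℕ) (hm : 0 < m) (hmd : m < d) (hu0 : U 0) (hud : U d)
    (hsec : ∀ i, 0 < i → i < d → ¬ U i) (hvm : W m)
    (ha : d + 2 ≤ a) (ha' : a + 2 ≤ n) (hb : d + 2 ≤ b) (hb' : b + 2 ≤ n)
    (hua : U a) (hvb : W b) : False := by
  obtain ⟨lo, hi, L, q1, q2, q3, P⟩ := H.exPath (d + 2) (n - 2) a b (by omega) (by omega)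
    ha (by omega) hb (by omega) hua hvb
  clear hua hvb
  obtain ⟨i, j, hi1, hj1, hj2, hvi, hvj, hall⟩ := firstLast W d m (by omega) hvm
  by_cases hij : i = j
  · -- one neighbour: theta between h i and u
    have P1 := H.cons n (by omega) (H.arc 0 i (by omega) (by omega) (by omega))
      (by clear hTheta hPyr P H; grind [EE]) (by omega) (by clear hTheta hPyr P H; grind [EE])
    have P2 := H.cons n (by omega) (H.arc i d (by omega) (by omega) (by omega)).rev
      (by clear hTheta hPyr P P1 H; grind [EE]) (by omega) (by clear hTheta hPyr P P1 H; grind [EE])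
    have P3 := (H.cons i (by omega) P.rev (by clear hTheta hPyr P P1 P2 H; grind [EE]) (by omega)
      (by clear hTheta hPyr P P1 P2 H; grind [EE])).rev
    refine hTheta (H.theta P1 P2 P3 (by omega) (by omega) (by omega) ?_ ?_ ?_) <;>
      clear P P1 P2 P3 H hTheta hPyr
    · grind [EE]
    · grind [EE]
    · grind [EE]
  have P1 := H.cons n (by omega) (H.arc 0 i (by omega) (by omega) (by omega))
      (by clear hTheta hPyr P H; grind [EE]) (by omega) (by clear hTheta hPyr P H; grind [EE])
  have P2 := H.cons n (by omega) (H.arc j d (by omega) (by omega) (by omega)).rev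
      (by clear hTheta hPyr P P1 H; grind [EE]) (by omega) (by clear hTheta hPyr P P1 H; grind [EE])
  by_cases hij' : j = i + 1
  · refine hPyr (H.pyramid P1 P2 P (by omega) (by omega) (by omega) (by omega)
      ?_ ?_ ?_ ?_ ?_ ?_) <;> clear P P1 P2 H hTheta hPyr
    · grind [EE]
    · grind [EE]
    · grind [EE]
    · grind [EE]
    · grind [EE]
    · grind [EE]
  · have Q1 := (H.cons (n + 1) (by omega) P1.rev (by clear hTheta hPyr P P1 P2 H; grind [EE]) (by omega)
      (by clear hTheta hPyr P P1 P2 H; grind [EE])).rev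
    have Q2 := (H.cons (n + 1) (by omega) P2.rev (by clear hTheta hPyr P P1 P2 H Q1; grind [EE]) (by omega)
      (by clear hTheta hPyr P P1 P2 H Q1; grind [EE])).rev
    refine hTheta (H.theta Q1 Q2 P (by omega) (by omega) (by omega) ?_ ?_ ?_) <;>
      clear P P1 P2 Q1 Q2 H hTheta hPyr
    · grind [EE]
    · grind [EE]
    · grind [EE]


open Classical in
/-- number of `i < n` with `P i` -/
noncomputable def cnt (P : ℕ → Prop) (n : ℕ) : ℕ := Nat.count P n

theorem cnt_zero (P : ℕ → Prop) : cnt P 0 = 0 := by simp [cnt]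

open Classical in
theorem cnt_succ (P : ℕ → Prop) (n : ℕ) : cnt P (n + 1) = cnt P n + if P n then 1 else 0 := by
  simp [cnt, Nat.count_succ]

theorem cnt_eq_ncard (P : ℕ → Prop) (n : ℕ) : cnt P n = {i | i < n ∧ P i}.ncard := by
  classical
  rw [cnt, Nat.count_eq_card_filter_range]
  rw [← Set.ncard_coe_finset]
  congr 1
  ext i
  simp

theorem cnt_congr {P Q : ℕ → Prop} {n : ℕ} (h : ∀ i, i < n → (P i ↔ Q i)) : cnt P n = cnt Q n := by
  rw [cnt_eq_ncard, cnt_eq_ncard]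
  congr 1
  ext i
  simp only [Set.mem_ofPred_eq]
  grind

theorem ncard_zmod (P : ℕ → Prop) (n : ℕ) (hn : 4 ≤ n) :
    {i : ZMod n | P i.val}.ncard = cnt P n := by
  have : NeZero n := ⟨by omega⟩
  rw [cnt_eq_ncard]
  rw [← Set.ncard_image_of_injective _ (ZMod.val_injective n)]
  congr 1
  ext i
  simp only [Set.mem_image, Set.mem_ofPred_eq]
  constructor
  · rintro ⟨x, h1, rfl⟩
    exact ⟨ZMod.val_lt x, h1⟩
  · rintro ⟨h1, h2⟩
    refine ⟨(i : ZMod n), ?_, ?_⟩ <;> rw [ZMod.val_natCast_of_lt h1]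
    exact h2

theorem zmod_eq_add_one (n : ℕ) (hn : 4 ≤ n) (i j : ZMod n) :
    j = i + 1 ↔ (i.val + 1 = j.val ∨ (j.val = 0 ∧ i.val + 1 = n)) := by
  have : NeZero n := ⟨by omega⟩
  have hi := ZMod.val_lt i
  have hj := ZMod.val_lt j
  have e1 : (1 : ZMod n).val = 1 := by
    have := ZMod.val_natCast_of_lt (n := n) (a := 1) (by omega)
    simpa using this
  rw [← (ZMod.val_injective n).eq_iff, ZMod.val_add, e1]
  rcases Nat.lt_or_ge (i.val + 1) n with h | h
  · rw [Nat.mod_eq_of_lt h]; omega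
  · have : i.val + 1 = n := by omega
    rw [this, Nat.mod_self]; omega

theorem HoleSeq.emb {G : SimpleGraph V} {n : ℕ} {h : ℕ → V} (H : HoleSeq G n h) :
    IsHoleEmb G n (fun i : ZMod n => h i.val) := by
  have h4 := H.four
  have : NeZero n := ⟨by omega⟩
  refine ⟨h4, ?_, ?_⟩
  · intro i j hij
    exact ZMod.val_injective n (H.inj _ _ (ZMod.val_lt i) (ZMod.val_lt j) hij)
  · intro i j
    rw [H.adj _ _ (ZMod.val_lt i) (ZMod.val_lt j), zmod_eq_add_one n h4, zmod_eq_add_one n h4]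
    omega

theorem HoleSeq.evenWheel {G : SimpleGraph V} {n : ℕ} {h : ℕ → V} (H : HoleSeq G n h) {w : V}
    (hw : ∀ i, i < n → h i ≠ w) (h3 : 3 ≤ cnt (fun i => G.Adj w (h i)) n)
    (he : Even (cnt (fun i => G.Adj w (h i)) n)) : ContainsEvenWheel G := by
  have h4 := H.four
  have : NeZero n := ⟨by omega⟩
  have e := ncard_zmod (fun i => G.Adj w (h i)) n h4
  refine ⟨n, _, w, H.emb, ?_, ?_, ?_⟩
  · rintro ⟨i, hi⟩
    exact hw _ (ZMod.val_lt i) hi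
  · rw [e]; exact h3
  · rw [e]; exact he

theorem Cd.map {G : SimpleGraph V} {n : ℕ} {g : ℕ → V} {U W U' W' : ℕ → Prop} (H : Cd G n g U W)
    (s : ℕ → ℕ) (hs : ∀ i, i < n + 2 → s i < n + 2)
    (hi : ∀ i j, i < n + 2 → j < n + 2 → s i = s j → i = j)
    (he : ∀ i j, i < n + 2 → j < n + 2 → (EE n U W (s i) (s j) ↔ EE n U' W' i j)) :
    Cd G n (fun i => g (s i)) U' W' := by
  refine ⟨H.four, fun i j h1 h2 h3 => hi i j h1 h2 (H.inj _ _ (hs _ h1) (hs _ h2) h3), fun i j h1 h2 => ?_⟩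
  rw [H.adj _ _ (hs _ h1) (hs _ h2), he i j h1 h2]

theorem Cd.swap {G : SimpleGraph V} {n : ℕ} {g : ℕ → V} {U W : ℕ → Prop} (H : Cd G n g U W) :
    ∃ g', Cd G n g' W U := by
  refine ⟨_, H.map (fun i => if i = n then n + 1 else if i = n + 1 then n else i) ?_ ?_ ?_⟩ <;> clear H
  · intro i hi; split_ifs <;> omega
  · intro i j hi hj; split_ifs <;> omega
  · intro i j hi hj; split_ifs <;> grind (splits := 30) [EE]

theorem Cd.rv {G : SimpleGraph V} {n : ℕ} {g : ℕ → V} {U W : ℕ → Prop} (H : Cd G n g U W) :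
    ∃ g', Cd G n g' (fun i => U (n - 1 - i)) (fun i => W (n - 1 - i)) := by
  have h4 := H.four
  refine ⟨_, H.map (fun i => if i < n then n - 1 - i else i) ?_ ?_ ?_⟩ <;> clear H
  · intro i hi; split_ifs <;> omega
  · intro i j hi hj; split_ifs <;> omega
  · intro i j hi hj; split_ifs <;> grind (splits := 30) [EE]

theorem Cd.rot {G : SimpleGraph V} {n : ℕ} {g : ℕ → V} {U W : ℕ → Prop} (H : Cd G n g U W) (k : ℕ)
    (hk : k < n) :
    ∃ g', Cd G n g' (fun i => if i + k < n then U (i + k) else U (i + k - n))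
      (fun i => if i + k < n then W (i + k) else W (i + k - n)) := by
  have h4 := H.four
  refine ⟨_, H.map (fun i => if i < n then (if i + k < n then i + k else i + k - n) else i) ?_ ?_ ?_⟩
    <;> clear H
  · intro i hi; split_ifs <;> omega
  · intro i j hi hj; split_ifs <;> omega
  · intro i j hi hj; split_ifs <;> grind (splits := 30) [EE]

theorem Cd.square {G : SimpleGraph V} {n : ℕ} {g : ℕ → V} {U W : ℕ → Prop} (H : Cd G n g U W)
    (a b c d : ℕ) (ha : a < n + 2) (hb : b < n + 2) (hc : c < n + 2) (hd : d < n + 2)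
    (hac : a ≠ c) (hbd : b ≠ d) (e1 : EE n U W a b) (e2 : EE n U W b c) (e3 : EE n U W c d)
    (e4 : EE n U W d a) (f1 : ¬ EE n U W a c) (f2 : ¬ EE n U W b d) : ContainsSquare G := by
  rw [← H.adj _ _ (by omega) (by omega)] at e1 e2 e3 e4 f1 f2
  have h1 : g a ≠ g c := fun e => hac (H.inj _ _ ha hc e)
  have h2 : g b ≠ g d := fun e => hbd (H.inj _ _ hb hd e)
  have hs : HoleSeq G 4 (fun i => if i = 0 then g a else if i = 1 then g b else if i = 2 then g c else g d) := by
    have n1 := e1.ne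
    have n2 := e2.ne
    have n3 := e3.ne
    have n4 := e4.ne
    refine ⟨le_rfl, ?_, ?_⟩
    · intro i j hi hj
      interval_cases i <;> interval_cases j <;> grind
    · have s1 := e1.symm
      have s2 := e2.symm
      have s3 := e3.symm
      have s4 := e4.symm
      have s5 := fun e => f1 (G.adj_symm e)
      have s6 := fun e => f2 (G.adj_symm e)
      have r := fun x => G.loopless.irrefl x
      intro i j hi hj
      interval_cases i <;> interval_cases j <;> grind
  exact ⟨_, hs.emb⟩


theorem endB {G : SimpleGraph V} (hPyr : ¬ContainsPyramid G)
    {n : ℕ} {g : ℕ → V} {U W : ℕ → Prop} (H : Cd G n g U W)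
    (d m a : ℕ) (hu0 : U 0) (hud : U d) (hsec : ∀ i, 0 < i → i < d → ¬ U i)
    (hv1 : W (n - 1)) (hsec' : ∀ i, d + 1 < i → i < n - 1 → ¬ W i)
    (hm : 0 < m) (hmd : m < d) (hvm : W m) (ha : d + 1 < a) (ha' : a < n - 1) (hua : U a)
    (HS : ∀ i, i < d → ¬ (∀ j, j ≤ d → (W j ↔ j = i ∨ j = i + 1)))
    (hv0 : W 0) (hu1 : ¬ U (n - 1)) : False := by
  obtain ⟨i, j, hi1, hj1, hj2, hvi, hvj, hall⟩ := firstLast W d m (by omega) hvm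
  obtain ⟨q', q, hq1, hq2, hq3, -, huq, hallq⟩ := firstLast U (n - 1) a (by omega) hua
  have hqn : q ≠ n - 1 := by rintro rfl; exact hu1 huq
  have hj3 : 2 ≤ j := by
    by_contra hc
    refine HS 0 (by omega) ?_
    have e1 : j = 1 := by omega
    have e2 : m = 1 := by omega
    subst e1 e2
    clear HS H hPyr
    grind
  clear HS
  have P1 := H.cons n (by omega) (H.single 0 (by omega)) (by clear H hPyr; grind [EE]) (by omega)
    (by clear H hPyr; grind [EE])
  have P2 := H.cons n (by omega) (H.arc q (n - 1) (by omega) (by omega) (by omega))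
    (by clear H hPyr; grind [EE]) (by omega) (by clear H hPyr; grind [EE])
  have P3 := H.cons n (by omega) (H.arc j d (by omega) (by omega) (by omega)).rev
    (by clear H hPyr; grind [EE]) (by omega) (by clear H hPyr; grind [EE])
  have P4 := (H.cons (n + 1) (by omega) P3.rev (by clear H hPyr; grind [EE]) (by omega)
    (by clear H hPyr; grind [EE])).rev
  refine hPyr (H.pyramid P1 P2 P4 (by omega) (by omega) (by omega) (by omega)
      ?_ ?_ ?_ ?_ ?_ ?_) <;> clear P1 P2 P3 P4 H hPyr
  · grind [EE]
  · grind [EE]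
  · grind [EE]
  · grind [EE]
  · grind [EE]
  · grind [EE]

theorem endA {G : SimpleGraph V} (hTheta : ¬ContainsTheta G) (hSq : ¬ ContainsSquare G)
    {n : ℕ} {g : ℕ → V} {U W : ℕ → Prop} (H : Cd G n g U W)
    (d m : ℕ) (hu0 : U 0) (hud : U d) (hsec : ∀ i, 0 < i → i < d → ¬ U i)
    (hv1 : W (n - 1)) (hdn : d + 2 < n)
    (hm : 0 < m) (hmd : m < d) (hvm : W m)
    (HS : ∀ i, i < d → ¬ (∀ j, j ≤ d → (W j ↔ j = i ∨ j = i + 1)))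
    (hv0 : ¬ W 0) (hu1 : ¬ U (n - 1)) : False := by
  obtain ⟨i, j, hi1, hj1, hj2, hvi, hvj, hall⟩ := firstLast W d m (by omega) hvm
  have hi0 : i ≠ 0 := by rintro rfl; exact hv0 hvi
  by_cases hij : i = j
  · subst hij
    clear HS
    obtain rfl : m = i := by omega
    by_cases h1 : m = 1
    · subst h1
      refine hSq (H.square (n + 1) 1 0 (n - 1) (by omega) (by omega) (by omega) (by omega) (by omega) (by omega)
        ?_ ?_ ?_ ?_ ?_ ?_) <;> clear hSq hTheta H <;> grind [EE]
    · have P1 := H.arc 0 m (by omega) (by omega) (by omega)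
      have P2 := H.cons (n - 1) (by omega) (H.cons (n + 1) (by omega) (H.single m (by omega))
        (by clear P1 H hTheta hSq; grind [EE]) (by omega) (by clear P1 H hTheta hSq; grind [EE]))
        (by clear P1 H hTheta hSq; grind [EE]) (by omega) (by clear P1 H hTheta hSq; grind [EE])
      have P3 := H.cons 0 (by omega) P2
        (by clear P2 P1 H hTheta hSq; grind [EE]) (by omega) (by clear P2 P1 H hTheta hSq; grind [EE])
      have P4 := H.cons n (by omega) (H.arc m d (by omega) (by omega) (by omega)).rev
        (by clear P1 P2 P3 H hTheta hSq; grind [EE]) (by omega) (by clear P1 P2 P3 H hTheta hSq; grind [EE])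
      have P5 := H.cons 0 (by omega) P4
        (by clear P1 P2 P3 P4 H hTheta hSq; grind [EE]) (by omega) (by clear P1 P2 P3 P4 H hTheta hSq; grind [EE])
      refine hTheta (H.theta P1 P3 P5 (by omega) (by omega) (by omega) ?_ ?_ ?_) <;>
        clear P1 P2 P3 P4 P5 H hTheta hSq
      · grind [EE]
      · grind [EE]
      · grind [EE]
  · have hij' : i + 2 ≤ j := by
      by_contra hc
      refine HS i (by omega) ?_
      obtain rfl : j = i + 1 := by omega
      clear HS H hTheta hSq
      grind
    clear HS
    have P1 := H.cons 0 (by omega) (H.cons (n - 1) (by omega) (H.single (n + 1) (by omega))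
        (by clear H hTheta hSq; grind [EE]) (by omega) (by clear H hTheta hSq; grind [EE]))
        (by clear H hTheta hSq; grind [EE]) (by omega) (by clear H hTheta hSq; grind [EE])
    have P2 := (H.cons (n + 1) (by omega) (H.arc 0 i (by omega) (by omega) (by omega)).rev
      (by clear P1 H hTheta hSq; grind [EE]) (by omega) (by clear P1 H hTheta hSq; grind [EE])).rev
    have P3 := (H.cons (n + 1) (by omega) (H.arc j d (by omega) (by omega) (by omega))
      (by clear P1 P2 H hTheta hSq; grind [EE]) (by omega) (by clear P1 P2 H hTheta hSq; grind [EE])).rev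
    have P4 := H.cons n (by omega) P3
      (by clear P1 P2 P3 H hTheta hSq; grind [EE]) (by omega) (by clear P1 P2 P3 H hTheta hSq; grind [EE])
    have P5 := H.cons 0 (by omega) P4
        (by clear P1 P2 P3 P4 H hTheta hSq; grind [EE]) (by omega) (by clear P1 P2 P3 P4 H hTheta hSq; grind [EE])
    refine hTheta (H.theta P1 P2 P5 (by omega) (by omega) (by omega) ?_ ?_ ?_) <;>
        clear P1 P2 P3 P4 P5 H hTheta hSq
    · grind [EE]
    · grind [EE]
    · grind [EE]

theorem endLemma {G : SimpleGraph V} (hTheta : ¬ContainsTheta G) (hPyr : ¬ContainsPyramid G)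
    (hSq : ¬ ContainsSquare G)
    {n : ℕ} {g : ℕ → V} {U W : ℕ → Prop} (H : Cd G n g U W)
    (d m a : ℕ) (hu0 : U 0) (hud : U d) (hsec : ∀ i, 0 < i → i < d → ¬ U i)
    (hv1 : W (n - 1)) (hvd : W (d + 1)) (hsec' : ∀ i, d + 1 < i → i < n - 1 → ¬ W i)
    (hm : 0 < m) (hmd : m < d) (hvm : W m) (ha : d + 1 < a) (ha' : a < n - 1) (hua : U a)
    (HS : ∀ i, i < d → ¬ (∀ j, j ≤ d → (W j ↔ j = i ∨ j = i + 1)))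
    (HR : ∀ i, d < i → i + 1 < n → ¬ (∀ j, d < j → j < n → (U j ↔ j = i ∨ j = i + 1))) :
    W 0 ∧ U (n - 1) := by
  by_cases h0 : W 0
  · refine ⟨h0, ?_⟩
    by_contra h1
    exact endB hPyr H d m a hu0 hud hsec hv1 hsec' hm hmd hvm ha ha' hua HS h0 h1
  · exfalso
    by_cases h1 : U (n - 1)
    · obtain ⟨g1, H1⟩ := H.rv
      obtain ⟨g2, H2⟩ := H1.swap
      refine endB hPyr H2 (n - 2 - d) (n - 1 - a) (n - 1 - m) ?_ ?_ ?_ ?_ ?_ ?_ ?_ ?_ ?_ ?_ ?_ ?_ ?_ ?_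
      · exact hv1
      · rwa [show n - 1 - (n - 2 - d) = d + 1 by omega]
      · intro i i1 i2; exact hsec' _ (by omega) (by omega)
      · rwa [show n - 1 - (n - 1) = 0 by omega]
      · intro i i1 i2; exact hsec _ (by omega) (by omega)
      · omega
      · omega
      · rwa [show n - 1 - (n - 1 - a) = a by omega]
      · omega
      · omega
      · rwa [show n - 1 - (n - 1 - m) = m by omega]
      · intro i hi hc
        refine HR (n - 2 - i) (by omega) (by omega) ?_
        intro j j1 j2
        have := hc (n - 1 - j) (by omega)
        rw [show n - 1 - (n - 1 - j) = j by omega] at this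
        rw [this]; omega
      · exact h1
      · rwa [show n - 1 - (n - 1) = 0 by omega]
    · exact endA hTheta hSq H d m hu0 hud hsec hv1 (by omega) hm hmd hvm HS h0 h1

theorem endBoth {G : SimpleGraph V} (hTheta : ¬ContainsTheta G) (hPyr : ¬ContainsPyramid G)
    (hSq : ¬ ContainsSquare G)
    {n : ℕ} {g : ℕ → V} {U W : ℕ → Prop} (H : Cd G n g U W)
    (d m a : ℕ) (hu0 : U 0) (hud : U d) (hsec : ∀ i, 0 < i → i < d → ¬ U i)
    (hv1 : W (n - 1)) (hvd : W (d + 1)) (hsec' : ∀ i, d + 1 < i → i < n - 1 → ¬ W i)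
    (hm : 0 < m) (hmd : m < d) (hvm : W m) (ha : d + 1 < a) (ha' : a < n - 1) (hua : U a)
    (HS : ∀ i, i < d → ¬ (∀ j, j ≤ d → (W j ↔ j = i ∨ j = i + 1)))
    (HR : ∀ i, d < i → i + 1 < n → ¬ (∀ j, d < j → j < n → (U j ↔ j = i ∨ j = i + 1))) :
    False := by
  obtain ⟨k1, k2⟩ := endLemma hTheta hPyr hSq H d m a hu0 hud hsec hv1 hvd hsec' hm hmd hvm ha ha' hua HS HR
  obtain ⟨g1, H1⟩ := H.rot (d + 1) (by omega)
  obtain ⟨g2, H2⟩ := H1.swap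
  have h2 : U (d + 1) := by
    have := (endLemma hTheta hPyr hSq H2 (n - 2 - d) (a - (d + 1)) (m + n - (d + 1)) ?_ ?_ ?_ ?_ ?_ ?_ ?_
      ?_ ?_ ?_ ?_ ?_ ?_ ?_).1
    · rwa [if_pos (by omega), Nat.zero_add] at this
    · rwa [if_pos (by omega), Nat.zero_add]
    · rwa [if_pos (by omega), show n - 2 - d + (d + 1) = n - 1 by omega]
    · intro i i1 i2; rw [if_pos (by omega)]; exact hsec' _ (by omega) (by omega)
    · rwa [if_neg (by omega), show n - 1 + (d + 1) - n = d by omega]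
    · rwa [if_neg (by omega), show n - 2 - d + 1 + (d + 1) - n = 0 by omega]
    · intro i i1 i2; rw [if_neg (by omega)]; exact hsec _ (by omega) (by omega)
    · omega
    · omega
    · rwa [if_pos (by omega), show a - (d + 1) + (d + 1) = a by omega]
    · omega
    · omega
    · rwa [if_neg (by omega), show m + n - (d + 1) + (d + 1) - n = m by omega]
    · intro i hi hc
      refine HR (i + (d + 1)) (by omega) (by omega) ?_
      intro j j1 j2
      have := hc (j - (d + 1)) (by omega)
      rw [if_pos (by omega), show j - (d + 1) + (d + 1) = j by omega] at this
      rw [this]; omega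
    · intro i hi1 hi2 hc
      refine HS (i + (d + 1) - n) (by omega) ?_
      intro j j1
      have := hc (j + n - (d + 1)) (by omega) (by omega)
      rw [if_neg (by omega), show j + n - (d + 1) + (d + 1) - n = j by omega] at this
      rw [this]; omega
  clear HS HR
  refine hSq (H.square (n + 1) 0 n (d + 1) (by omega) (by omega) (by omega) (by omega) (by omega) (by omega)
        ?_ ?_ ?_ ?_ ?_ ?_) <;> clear hSq hTheta hPyr H H1 H2 <;> grind [EE]


theorem cnt_finite (P : ℕ → Prop) (n : ℕ) : {i | i < n ∧ P i}.Finite :=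
  (Set.finite_lt_nat n).subset (fun _ h => h.1)

theorem cnt_eq_card {P : ℕ → Prop} {n : ℕ} (s : Finset ℕ) (h : ∀ j, (j < n ∧ P j) ↔ j ∈ s) :
    cnt P n = s.card := by
  rw [cnt_eq_ncard, ← Set.ncard_coe_finset]
  congr 1
  ext j
  simp [h]

theorem cnt_le_card {P : ℕ → Prop} {n : ℕ} (s : Finset ℕ) (h : ∀ j, j < n → P j → j ∈ s) :
    cnt P n ≤ s.card := by
  rw [cnt_eq_ncard, ← Set.ncard_coe_finset]
  exact Set.ncard_le_ncard (fun j hj => h j hj.1 hj.2) (Finset.finite_toSet s)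

theorem card_le_cnt {P : ℕ → Prop} {n : ℕ} (s : Finset ℕ) (h : ∀ j, j ∈ s → j < n ∧ P j) :
    s.card ≤ cnt P n := by
  rw [cnt_eq_ncard, ← Set.ncard_coe_finset]
  exact Set.ncard_le_ncard (fun j hj => h j hj) (cnt_finite P n)

theorem cnt_four {P : ℕ → Prop} {n : ℕ} (a b c d : ℕ) (h1 : a < b) (h2 : b < c) (h3 : c < d) (h4 : d < n)
    (h : ∀ j, j < n → (P j ↔ j = a ∨ j = b ∨ j = c ∨ j = d)) : cnt P n = 4 := by
  rw [cnt_eq_card {a, b, c, d}]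
  · rw [Finset.card_eq_of_equiv_fin]
    exact Fintype.equivFinOfCardEq (by
      simp only [Fintype.card_coe]
      rw [Finset.card_insert_of_notMem (by simp; omega), Finset.card_insert_of_notMem (by simp; omega),
        Finset.card_insert_of_notMem (by simp; omega)]; simp)
  · intro j
    simp only [Finset.mem_insert, Finset.mem_singleton]
    constructor
    · rintro ⟨j1, j2⟩; exact (h j j1).1 j2
    · intro hj; exact ⟨by omega, (h j (by omega)).2 hj⟩

theorem cnt_extra {P : ℕ → Prop} {n d e : ℕ} (h1 : d < e) (h2 : e < n)
    (h : ∀ i, d < i → i < n → (P i ↔ i = e)) : cnt P n = cnt P (d + 1) + 1 := by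
  rw [cnt_eq_ncard, cnt_eq_ncard, ← Set.ncard_insert_of_notMem (a := e) (by simp; omega) (cnt_finite _ _)]
  congr 1
  ext j
  simp only [Set.mem_insert_iff, Set.mem_ofPred_eq]
  grind

/-- exactly two nonadjacent neighbours on a hole give a theta -/
theorem thetaTwo0 {G : SimpleGraph V} {n : ℕ} {h : ℕ → V} (H : HoleSeq G n h) {v : V}
    (hv : ∀ i, i < n → h i ≠ v) (p : ℕ) (hp : 2 ≤ p) (hp' : p + 2 ≤ n)
    (hN : ∀ j, j < n → (G.Adj v (h j) ↔ j = 0 ∨ j = p)) : ContainsTheta G := by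
  have hA := H.adj'
  have hI := H.inj
  have hS := fun a b => G.adj_comm a b
  have P1 := H.arcUp 0 p (by omega) (by omega) (by omega)
  have P2 := ((H.arcUp p (n - 1) (by omega) (by omega) (by omega)).rev).cons (h 0)
    (by rw [H.adj _ _ (by omega) (by omega)]; omega) (by grind [mem_arcS]) (by rw [arc_ball]; grind)
  have P3 := ((IndPath.single G (h p)).cons v (by grind) (by grind) (by grind)).cons (h 0)
    (by grind) (by grind) (by simp only [Set.forall_mem_insert, Set.mem_singleton_iff, forall_eq]; grind)
  refine mkTheta P1 P2 P3 (by omega) (by omega) (by omega) ?_ ?_ ?_ <;> clear P1 P2 P3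
  · simp only [Set.forall_mem_insert, arc_ball, Set.mem_singleton_iff, forall_eq]
    grind
  · simp only [Set.forall_mem_insert, arc_ball, Set.mem_singleton_iff, forall_eq]
    grind
  · simp only [Set.forall_mem_insert, arc_ball, Set.mem_singleton_iff, forall_eq]
    grind

theorem thetaTwo {G : SimpleGraph V} {n : ℕ} {h : ℕ → V} (H : HoleSeq G n h) {v : V}
    (hv : ∀ i, i < n → h i ≠ v) (i j : ℕ) (hij : i + 2 ≤ j) (hj : j < n) (hn : ¬ (i = 0 ∧ j + 1 = n))
    (hN : ∀ k, k < n → (G.Adj v (h k) ↔ k = i ∨ k = j)) : ContainsTheta G := by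
  refine thetaTwo0 (H.rot i (by omega)) (v := v) ?_ (j - i) (by omega) (by omega) ?_
  · intro k hk
    split_ifs <;> exact hv _ (by omega)
  · intro k hk
    split_ifs <;> rw [hN _ (by omega)] <;> omega


/-- the neighbours are exactly three consecutive positions centred at `c` -/
def Consec (P : ℕ → Prop) (n : ℕ) : Prop :=
  ∃ c, c < n ∧ ∀ j, j < n →
    (P j ↔ j = c ∨ j + 1 = c ∨ (c = 0 ∧ j + 1 = n) ∨ j = c + 1 ∨ (c + 1 = n ∧ j = 0))

theorem Cd.adjU {G : SimpleGraph V} {n : ℕ} {g : ℕ → V} {U W : ℕ → Prop} (H : Cd G n g U W) (j : ℕ)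
    (hj : j < n) : G.Adj (g n) (g j) ↔ U j := by
  rw [H.adj _ _ (by omega) (by omega)]; clear H; grind [EE]

theorem Cd.adjW {G : SimpleGraph V} {n : ℕ} {g : ℕ → V} {U W : ℕ → Prop} (H : Cd G n g U W) (j : ℕ)
    (hj : j < n) : G.Adj (g (n + 1)) (g j) ↔ W j := by
  rw [H.adj _ _ (by omega) (by omega)]; clear H; grind [EE]

theorem Cd.neU {G : SimpleGraph V} {n : ℕ} {g : ℕ → V} {U W : ℕ → Prop} (H : Cd G n g U W) (j : ℕ)
    (hj : j < n) : g j ≠ g n := fun e => by have := H.inj _ _ (by omega) (by omega) e; omega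

theorem Cd.neW {G : SimpleGraph V} {n : ℕ} {g : ℕ → V} {U W : ℕ → Prop} (H : Cd G n g U W) (j : ℕ)
    (hj : j < n + 1) : g j ≠ g (n + 1) := fun e => by have := H.inj _ _ (by omega) (by omega) e; omega

theorem lemmaA {G : SimpleGraph V} (hPyr : ¬ContainsPyramid G)
    {n : ℕ} {g : ℕ → V} {U W : ℕ → Prop} (H : Cd G n g U W)
    (d : ℕ) (hd : 2 ≤ d) (hdn : d + 1 < n) (hu0 : U 0) (hud : U d)
    (hsec : ∀ i, 0 < i → i < d → ¬ U i)
    (hR : ∀ i, d + 2 ≤ i → i + 2 ≤ n → ¬ U i) (hU3 : 3 ≤ cnt U n) (hU4 : cnt U n ≠ 4) : Consec U n := by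
  have key : ∀ j, j < n → U j → j = 0 ∨ j = d ∨ j = d + 1 ∨ j = n - 1 := by
    intro j j1 j2
    by_contra hc
    rcases Nat.lt_or_ge j d with h | h
    · exact hsec j (by omega) h j2
    · exact hR j (by omega) (by omega) j2
  by_cases e : d + 1 = n - 1
  · have : U (n - 1) := by
      by_contra hc
      have : cnt U n ≤ _ := cnt_le_card {0, d} (by
        intro j j1 j2
        simp only [Finset.mem_insert, Finset.mem_singleton]
        have := key j j1 j2
        have : j ≠ n - 1 := by rintro rfl; exact hc j2
        omega)
      have := this.trans Finset.card_le_two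
      omega
    refine ⟨n - 1, by omega, fun j hj => ⟨fun hh => ?_, fun hh => ?_⟩⟩
    · have := key j hj hh; omega
    · have : j = n - 1 ∨ j = d ∨ j = 0 := by omega
      rcases this with rfl | rfl | rfl <;> assumption
  exfalso
  by_cases h1 : U (d + 1)
  · by_cases h2 : U (n - 1)
    · refine hU4 (cnt_four 0 d (d + 1) (n - 1) (by omega) (by omega) (by omega) (by omega)
        fun j hj => ⟨key j hj, ?_⟩)
      rintro (rfl | rfl | rfl | rfl) <;> assumption
    · refine hPyr (lemma0 H.hole H.neU d hd (by omega) fun j hj => ?_)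
      rw [H.adjU j hj]
      constructor
      · intro hh
        have := key j hj hh
        have : j ≠ n - 1 := by rintro rfl; exact h2 hh
        omega
      · rintro (rfl | rfl | rfl) <;> assumption
  · by_cases h2 : U (n - 1)
    · refine hPyr (lemma0' H.hole H.neU d (n - 1 - d) (by omega) (by omega) (by omega) fun j hj => ?_)
      rw [H.adjU j hj]
      constructor
      · intro hh
        have := key j hj hh
        have : j ≠ d + 1 := by rintro rfl; exact h1 hh
        omega
      · intro hh
        have : j = n - 1 ∨ j = d ∨ j = 0 := by omega
        rcases this with rfl | rfl | rfl <;> assumption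
    · have : cnt U n ≤ _ := cnt_le_card {0, d} (by
        intro j j1 j2
        simp only [Finset.mem_insert, Finset.mem_singleton]
        have := key j j1 j2
        have : j ≠ n - 1 := by rintro rfl; exact h2 j2
        have : j ≠ d + 1 := by rintro rfl; exact h1 j2
        omega)
      have := this.trans Finset.card_le_two
      omega

/-- hole obtained from a sector and the centre `u` -/
theorem Cd.sectorHole {G : SimpleGraph V} {n : ℕ} {g : ℕ → V} {U W : ℕ → Prop} (H : Cd G n g U W)
    (d : ℕ) (hd : 2 ≤ d) (hdn : d + 1 < n) (hu0 : U 0) (hud : U d)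
    (hsec : ∀ i, 0 < i → i < d → ¬ U i) :
    HoleSeq G (d + 2) (fun i => if i ≤ d then g i else g n) := by
  refine ⟨by omega, ?_, ?_⟩
  · intro i j hi hj hij
    split_ifs at hij <;> have := H.inj _ _ (by omega) (by omega) hij <;> omega
  · intro i j hi hj
    have hsi := hsec i
    have hsj := hsec j
    split_ifs <;> rw [H.adj _ _ (by omega) (by omega)] <;> clear H <;> grind (splits := 30) [EE]

theorem lemmaSingle {G : SimpleGraph V} (hTheta : ¬ContainsTheta G) (hEW : ¬ ContainsEvenWheel G)
    {n : ℕ} {g : ℕ → V} {U W : ℕ → Prop} (H : Cd G n g U W)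
    (d e : ℕ) (hd : 2 ≤ d) (hdn : d + 1 < n) (hu0 : U 0) (hud : U d)
    (hsec : ∀ i, 0 < i → i < d → ¬ U i) (he : d < e) (hen : e < n)
    (hW : ∀ i, d < i → i < n → (W i ↔ i = e)) (hW3 : 3 ≤ cnt W n) (hodd : cnt W n % 2 = 1) :
    ∃ i, i + 1 ≤ d ∧ ∀ j, j < n → (W j ↔ j = i ∨ j = i + 1 ∨ j = e) := by
  have hc := cnt_extra he hen hW
  have hex : ∃ m, m ≤ d ∧ W m := by
    by_contra hx
    push Not at hx
    have : cnt W (d + 1) ≤ _ := cnt_le_card ∅ (fun j j1 j2 => absurd j2 (hx j (by omega)))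
    simp at this
    omega
  obtain ⟨m, hmd, hm⟩ := hex
  obtain ⟨i, j, hi1, hj1, hj2, hvi, hvj, hall⟩ := firstLast W d m (by omega) hm
  have hij : i ≠ j := by
    rintro rfl
    have : cnt W (d + 1) ≤ _ := cnt_le_card {i} (fun j j1 j2 => by
      have := hall j (by omega) j2
      simp; omega)
    simp at this
    omega
  by_cases hij' : j = i + 1
  · refine ⟨i, by omega, fun k hk => ?_⟩
    rcases Nat.lt_or_ge d k with h | h
    · rw [hW k h hk]; omega
    · constructor
      · intro hh; have := hall k h hh; omega
      · intro hh
        have : k = i ∨ k = j := by omega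
        rcases this with rfl | rfl <;> assumption
  exfalso
  have HS := H.sectorHole d hd hdn hu0 hud hsec
  have hne : ∀ i, i < d + 2 → (if i ≤ d then g i else g n) ≠ g (n + 1) := by
    intro k hk
    split_ifs <;> exact H.neW _ (by omega)
  have hadj : ∀ k, k < d + 2 → (G.Adj (g (n + 1)) (if k ≤ d then g k else g n) ↔ k ≤ d ∧ W k) := by
    intro k hk
    split_ifs with hkd
    · rw [H.adjW k (by omega)]; tauto
    · rw [H.adj _ _ (by omega) (by omega)]
      unfold EE
      constructor
      · omega
      · intro hh; exact absurd hh.1 hkd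
  have hcnt : cnt (fun k => G.Adj (g (n + 1)) (if k ≤ d then g k else g n)) (d + 2) = cnt W (d + 1) := by
    rw [cnt_eq_ncard, cnt_eq_ncard]
    congr 1
    ext k
    simp only [Set.mem_ofPred_eq]
    constructor
    · rintro ⟨k1, k2⟩
      have := (hadj k k1).1 k2
      exact ⟨by omega, this.2⟩
    · rintro ⟨k1, k2⟩
      exact ⟨by omega, (hadj k (by omega)).2 ⟨by omega, k2⟩⟩
  by_cases h3 : 3 ≤ cnt W (d + 1)
  · refine hEW (HS.evenWheel hne (by rw [hcnt]; exact h3) ?_)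
    rw [hcnt, Nat.even_iff]; omega
  · refine hTheta (thetaTwo HS hne i j (by omega) (by omega) (by omega) fun k hk => ?_)
    rw [hadj k hk]
    constructor
    · rintro ⟨k1, k2⟩
      by_contra hx
      have : Finset.card {i, j, k} ≤ cnt W (d + 1) := card_le_cnt _ (by
        intro x hx
        simp only [Finset.mem_insert, Finset.mem_singleton] at hx
        rcases hx with rfl | rfl | rfl
        · exact ⟨by omega, hvi⟩
        · exact ⟨by omega, hvj⟩
        · exact ⟨by omega, k2⟩)
      rw [Finset.card_eq_three.2 ⟨i, j, k, hij, by omega, by omega, rfl⟩] at this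
      omega
    · rintro (rfl | rfl)
      · exact ⟨by omega, hvi⟩
      · exact ⟨by omega, hvj⟩

theorem lemmaS {G : SimpleGraph V} (hTheta : ¬ContainsTheta G) (hPyr : ¬ContainsPyramid G)
    (hEW : ¬ ContainsEvenWheel G) (hSq : ¬ ContainsSquare G)
    {n : ℕ} {g : ℕ → V} {U W : ℕ → Prop} (H : Cd G n g U W)
    (d m e : ℕ) (hm : 0 < m) (hmd : m < d) (hu0 : U 0) (hud : U d)
    (hsec : ∀ i, 0 < i → i < d → ¬ U i) (hvm : W m) (he : d < e) (hen : e < n) (hve : W e)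
    (hU3 : 3 ≤ cnt U n) (hU : cnt U n % 2 = 1) (hW3 : 3 ≤ cnt W n) (hW : cnt W n % 2 = 1) :
    Consec U n ∨ Consec W n := by
  have h4 := H.four
  by_cases hx : ∃ a, d + 2 ≤ a ∧ a + 2 ≤ n ∧ U a
  swap
  · push Not at hx
    by_cases hdn : d + 1 < n
    · exact Or.inl (lemmaA hPyr H d (by omega) hdn hu0 hud hsec hx hU3 (by omega))
    · omega
  right
  obtain ⟨a, ha, ha', hua⟩ := hx
  have hWR : ∀ i, d + 1 < i → i < n - 1 → ¬ W i := by
    intro b hb hb' hvb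
    exact sectorLemma hTheta hPyr H d m a b hm hmd hu0 hud hsec hvm ha ha' (by omega) (by omega) hua hvb
  by_cases hboth : W (n - 1) ∧ W (d + 1)
  · exfalso
    refine endBoth hTheta hPyr hSq H d m a hu0 hud hsec hboth.1 hboth.2 hWR hm hmd hvm (by omega) (by omega) hua ?_ ?_
    · intro i hi hh
      have := cnt_four (P := W) (n := n) i (i + 1) (d + 1) (n - 1) (by omega) (by omega) (by omega) (by omega) (by
        intro j hj
        rcases Nat.lt_or_ge d j with h | h
        · constructor
          · intro hw
            by_contra hc
            exact hWR j (by omega) (by omega) hw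
          · rintro (rfl | rfl | rfl | rfl)
            · omega
            · omega
            · exact hboth.2
            · exact hboth.1
        · rw [hh j h]; omega)
      omega
    · intro i hi hi' hh
      have := cnt_four (P := U) (n := n) 0 d i (i + 1) (by omega) (by omega) (by omega) (by omega) (by
        intro j hj
        rcases Nat.lt_or_ge d j with h | h
        · rw [hh j h hj]; omega
        · constructor
          · intro hw
            by_contra hc
            exact hsec j (by omega) (by omega) hw
          · rintro (rfl | rfl | rfl | rfl)
            · exact hu0
            · exact hud
            · omega
            · omega)
      omega
  have hWe : ∀ i, d < i → i < n → (W i ↔ i = e) := by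
    intro i i1 i2
    have ee : e = d + 1 ∨ e = n - 1 := by
      by_contra hc
      exact hWR e (by omega) (by omega) hve
    constructor
    · intro hw
      have ei : i = d + 1 ∨ i = n - 1 := by
        by_contra hc
        exact hWR i (by omega) (by omega) hw
      by_contra hc
      rcases ee with rfl | rfl <;> rcases ei with rfl | rfl <;> tauto
    · rintro rfl; exact hve
  obtain ⟨i, hi, hN⟩ := lemmaSingle hTheta hEW H d e (by omega) (by omega) hu0 hud hsec he hen hWe hW3 hW
  have ee : e = d + 1 ∨ e = n - 1 := by
    by_contra hc
    exact hWR e (by omega) (by omega) hve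
  rcases ee with rfl | rfl
  · by_cases hid : i + 1 = d
    · refine ⟨d, by omega, fun j hj => ?_⟩
      rw [hN j hj]; omega
    · refine absurd (lemma0' H.hole (fun i hi => H.neW i (by omega)) (d + 1) (i + n - (d + 1)) (by omega) (by omega)
        (by omega) fun j hj => ?_) hPyr
      rw [H.adjW j hj, hN j hj]; omega
  · by_cases hid : i = 0
    · refine ⟨0, by omega, fun j hj => ?_⟩
      rw [hN j hj]; omega
    · refine absurd (lemma0' H.hole (fun i hi => H.neW i (by omega)) (n - 1) (i + 1) (by omega) (by omega)
        (by omega) fun j hj => ?_) hPyr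
      rw [H.adjW j hj, hN j hj]; omega


theorem lemma1 {G : SimpleGraph V} (hTheta : ¬ContainsTheta G) (hPyr : ¬ContainsPyramid G)
    (hEW : ¬ ContainsEvenWheel G)
    {n : ℕ} {g : ℕ → V} {U W : ℕ → Prop} (H : Cd G n g U W)
    (hU : ∀ i, i < n → (U i ↔ i = 0 ∨ i = 1 ∨ i + 1 = n)) (hW0 : W 0)
    (hW3 : 3 ≤ cnt W n) (hW : cnt W n % 2 = 1) :
    (∀ i, i < n → (W i ↔ i = 0 ∨ i = 1 ∨ i = 2)) ∨
    (∀ i, i < n → (W i ↔ i = 0 ∨ i + 1 = n ∨ i + 2 = n)) := by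
  have h4 := H.four
  have HS : HoleSeq G n (fun i => if i = 0 then g n else g i) := by
    refine ⟨h4, ?_, ?_⟩
    · intro i j hi hj hij
      split_ifs at hij <;> have := H.inj _ _ (by omega) (by omega) hij <;> omega
    · intro i j hi hj
      have hsi := hU i
      have hsj := hU j
      split_ifs <;> rw [H.adj _ _ (by omega) (by omega)] <;> clear H hU <;> grind (splits := 30) [EE]
  have hne : ∀ i, i < n → (if i = 0 then g n else g i) ≠ g (n + 1) := by
    intro k hk
    split_ifs <;> exact H.neW _ (by omega)
  have hadj : ∀ k, k < n → (G.Adj (g (n + 1)) (if k = 0 then g n else g k) ↔ k ≠ 0 ∧ W k) := by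
    intro k hk
    split_ifs with hkd
    · rw [H.adj _ _ (by omega) (by omega)]
      unfold EE
      constructor
      · omega
      · intro hh; exact absurd hkd hh.1
    · rw [H.adjW k (by omega)]; tauto
  have hcnt : cnt W n = cnt (fun k => G.Adj (g (n + 1)) (if k = 0 then g n else g k)) n + 1 := by
    rw [cnt_eq_ncard, cnt_eq_ncard, ← Set.ncard_insert_of_notMem (a := 0) ?_ (cnt_finite _ _)]
    · congr 1
      ext k
      simp only [Set.mem_insert_iff, Set.mem_ofPred_eq]
      constructor
      · rintro ⟨k1, k2⟩
        by_cases hk : k = 0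
        · exact Or.inl hk
        · exact Or.inr ⟨k1, (hadj k k1).2 ⟨hk, k2⟩⟩
      · rintro (rfl | ⟨k1, k2⟩)
        · exact ⟨by omega, hW0⟩
        · exact ⟨k1, ((hadj k k1).1 k2).2⟩
    · intro hh
      exact ((hadj 0 hh.1).1 hh.2).1 rfl
  by_cases h3 : 3 ≤ cnt (fun k => G.Adj (g (n + 1)) (if k = 0 then g n else g k)) n
  · exact absurd (HS.evenWheel hne h3 (by rw [Nat.even_iff]; omega)) hEW
  have h2 : {i | i < n ∧ G.Adj (g (n + 1)) (if i = 0 then g n else g i)}.ncard = 2 := by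
    rw [← cnt_eq_ncard]; omega
  obtain ⟨p, q, hpq, hs⟩ : ∃ p q, p < q ∧ {i | i < n ∧ G.Adj (g (n + 1)) (if i = 0 then g n else g i)} = {p, q} := by
    obtain ⟨p, q, hpq, hs⟩ := Set.ncard_eq_two.1 h2
    rcases lt_or_gt_of_ne hpq with h | h
    · exact ⟨p, q, h, hs⟩
    · exact ⟨q, p, h, by rw [hs, Set.pair_comm]⟩
  have hs' : ∀ i, (i < n ∧ G.Adj (g (n + 1)) (if i = 0 then g n else g i)) ↔ i = p ∨ i = q := by
    intro i
    have := Set.ext_iff.1 hs i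
    simpa using this
  have hqn := (hs' q).2 (Or.inr rfl)
  have hpn := (hs' p).2 (Or.inl rfl)
  have hp0 := ((hadj p hpn.1).1 hpn.2).1
  have hN : ∀ i, i < n → (W i ↔ i = 0 ∨ i = p ∨ i = q) := by
    intro i hi
    rw [← hs' i, hadj i hi]
    constructor
    · intro hw
      by_cases h : i = 0
      · exact Or.inl h
      · exact Or.inr ⟨hi, h, hw⟩
    · rintro (rfl | hh)
      · exact hW0
      · exact hh.2.2
  have hqn1 := hqn.1
  by_cases hq : q = p + 1
  · by_cases h1 : p = 1
    · left; intro i hi; rw [hN i hi]; omega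
    by_cases h2 : q + 1 = n
    · right; intro i hi; rw [hN i hi]; omega
    refine absurd (lemma0 H.hole (v := g (n + 1)) (fun i hi => H.neW i (by omega)) p (by omega) (by omega)
      fun j hj => ?_) hPyr
    rw [H.adjW j hj, hN j hj]; omega
  · refine absurd (thetaTwo HS hne p q (by omega) hqn1 (by omega) fun k hk => ?_) hTheta
    rw [← hs' k]; exact ⟨fun x => ⟨hk, x⟩, fun x => x.2⟩

theorem zrep (n : ℕ) (hn : 4 ≤ n) (k m : ZMod n) : ∃ i : ℕ, i < n ∧ m = k + (i : ZMod n) := by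
  have : NeZero n := ⟨by omega⟩
  refine ⟨(m - k).val, ZMod.val_lt _, ?_⟩
  simp

theorem IsHoleEmb.seq {G : SimpleGraph V} {n : ℕ} {f : ZMod n → V} (hf : IsHoleEmb G n f) (k : ZMod n) :
    HoleSeq G n (fun i => f (k + (i : ZMod n))) := by
  obtain ⟨h4, hi, ha⟩ := hf
  have : NeZero n := ⟨by omega⟩
  refine ⟨h4, ?_, ?_⟩
  · intro i j i1 j1 hij
    have := add_left_cancel (hi hij)
    have := congrArg ZMod.val this
    rwa [ZMod.val_natCast_of_lt i1, ZMod.val_natCast_of_lt j1] at this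
  · intro i j i1 j1
    rw [ha]
    rw [add_assoc, add_assoc, add_right_inj, add_right_inj, zmod_eq_add_one n h4, zmod_eq_add_one n h4,
      ZMod.val_natCast_of_lt i1, ZMod.val_natCast_of_lt j1]
    omega

theorem cnt_base {G : SimpleGraph V} {n : ℕ} (hn : 4 ≤ n) (f : ZMod n → V) (u : V) (k : ZMod n) :
    cnt (fun i => G.Adj u (f (k + (i : ZMod n)))) n = {m : ZMod n | G.Adj u (f m)}.ncard := by
  have : NeZero n := ⟨by omega⟩
  rw [← ncard_zmod _ n hn, ← Set.ncard_image_of_injective _ (add_right_injective k)]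
  congr 1
  ext m
  simp only [Set.mem_image, Set.mem_ofPred_eq, ZMod.natCast_val, ZMod.cast_id', id]
  constructor
  · rintro ⟨x, h1, rfl⟩; exact h1
  · intro h; exact ⟨m - k, by simpa using h, by simp⟩

theorem nested_swap {G : SimpleGraph V} {n : ℕ} {f : ZMod n → V} {u v : V}
    (h : NestedCfg G n f u v) : NestedCfg G n f v u := by
  obtain ⟨i, d, h1, h2, h3, h4⟩ := h
  refine ⟨i + d, n - d, by omega, by omega, h4, ?_⟩
  intro m hm
  obtain ⟨e, e1, e2⟩ := h3 m hm
  refine ⟨e, by omega, ?_⟩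
  rw [e2, add_assoc i, ← Nat.cast_add, show d + (n - d) = n by omega]
  simp

theorem cousin_swap {G : SimpleGraph V} {n : ℕ} {f : ZMod n → V} {u v : V}
    (h : CousinCfg G n f u v) : CousinCfg G n f v u := Or.symm h

/-- change of base point -/
theorem base_shift {n : ℕ} (k : ZMod n) (c i : ℕ) :
    k + (c : ZMod n) + (i : ZMod n) = k + ((c + i : ℕ) : ZMod n) := by
  push_cast; ring

theorem base_wrap {n : ℕ} (k : ZMod n) (c : ℕ) (hc : n ≤ c) :
    k + (c : ZMod n) = k + ((c - n : ℕ) : ZMod n) := by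
  rw [Nat.cast_sub hc]; simp

theorem consecBase {G : SimpleGraph V} {n : ℕ} {f : ZMod n → V} {u : V} {k : ZMod n}
    (h : Consec (fun i => G.Adj u (f (k + (i : ZMod n)))) n) :
    ∃ b : ZMod n, ∀ i : ℕ, i < n → (G.Adj u (f (b + (i : ZMod n))) ↔ i = 0 ∨ i = 1 ∨ i + 1 = n) := by
  obtain ⟨c, hc, hN⟩ := h
  dsimp only at hN
  refine ⟨k + c, fun i hi => ?_⟩
  rw [base_shift]
  rcases Nat.lt_or_ge (c + i) n with h | h
  · rw [hN _ h]; omega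
  · rw [base_wrap _ _ h, hN _ (by omega)]; omega

theorem lemma1f {G : SimpleGraph V} (hTheta : ¬ContainsTheta G) (hPyr : ¬ContainsPyramid G)
    (hEW : ¬ ContainsEvenWheel G) {n : ℕ} {f : ZMod n → V} {u v : V}
    (hf : IsHoleEmb G n f) (hu : u ∉ Set.range f) (hv : v ∉ Set.range f) (huv : u ≠ v)
    (hna : ¬ G.Adj u v) (hW3 : 3 ≤ {m : ZMod n | G.Adj v (f m)}.ncard)
    (hW : {m : ZMod n | G.Adj v (f m)}.ncard % 2 = 1)
    (k : ZMod n) (h : Consec (fun i => G.Adj u (f (k + (i : ZMod n)))) n) :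
    NestedCfg G n f u v ∨ CousinCfg G n f u v := by
  have h4 := hf.1
  obtain ⟨b, hb⟩ := consecBase h
  have H := Cd.mk' (hf.seq b) (u := u) (v := v) (fun i _ e => hu ⟨_, e⟩) (fun i _ e => hv ⟨_, e⟩) huv hna
  have hn0 : ((n : ℕ) : ZMod n) = 0 := by simp
  have hn1 : ∀ i : ℕ, i + 1 = n → (i : ZMod n) = -1 := by
    intro i hi
    rw [← hi] at hn0
    push_cast at hn0
    rw [← hi]; linear_combination hn0
  have hn2 : ∀ i : ℕ, i + 2 = n → (i : ZMod n) = -2 := by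
    intro i hi
    rw [← hi] at hn0
    push_cast at hn0
    rw [← hi]; linear_combination hn0
  have hsurj := zrep n h4
  -- equality of positions
  have heq : ∀ i j : ℕ, i < n → j < n → (b + (i : ZMod n) = b + (j : ZMod n) ↔ i = j) := by
    intro i j hi hj
    constructor
    · intro e
      exact (hf.seq b).inj i j hi hj (congrArg f e)
    · rintro rfl; rfl
  by_cases hv0 : G.Adj v (f (b + ((0 : ℕ) : ZMod n)))
  · right
    have hm1 : b - 1 = b + ((n - 1 : ℕ) : ZMod n) := by rw [hn1 (n - 1) (by omega)]; ring
    have hm2 : b - 2 = b + ((n - 2 : ℕ) : ZMod n) := by rw [hn2 (n - 2) (by omega)]; ring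
    have heq0 : ∀ i : ℕ, i < n → (b + (i : ZMod n) = b ↔ i = 0) := by
      intro i hi
      rw [← heq i 0 hi (by omega)]; simp
    have hp1 : b + 1 = b + ((1 : ℕ) : ZMod n) := by simp
    have hp2 : b + 2 = b + ((2 : ℕ) : ZMod n) := by simp
    rcases lemma1 hTheta hPyr hEW H hb hv0 (by rw [cnt_base h4]; exact hW3) (by rw [cnt_base h4]; exact hW)
      with hN | hN
    · left
      refine ⟨b - 1, fun m => ?_, fun m => ?_⟩ <;> obtain ⟨i, hi, rfl⟩ := hsurj b m
      · rw [hb i hi, show b - 1 + 1 = b by ring, show b - 1 + 2 = b + 1 by ring, hm1, hp1]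
        rw [heq0 i hi, heq i _ hi (by omega), heq i _ hi (by omega)]
        omega
      · rw [hN i hi, show b - 1 + 1 = b by ring, show b - 1 + 2 = b + 1 by ring,
          show b - 1 + 3 = b + 2 by ring, hp1, hp2]
        rw [heq0 i hi, heq i _ hi (by omega), heq i _ hi (by omega)]
    · right
      refine ⟨b - 2, fun m => ?_, fun m => ?_⟩ <;> obtain ⟨i, hi, rfl⟩ := hsurj b m
      · rw [hN i hi, show b - 2 + 1 = b - 1 by ring, show b - 2 + 2 = b by ring, hm1, hm2]
        rw [heq0 i hi, heq i _ hi (by omega), heq i _ hi (by omega)]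
        omega
      · rw [hb i hi, show b - 2 + 1 = b - 1 by ring, show b - 2 + 2 = b by ring,
          show b - 2 + 3 = b + 1 by ring, hm1, hp1]
        rw [heq0 i hi, heq i _ hi (by omega), heq i _ hi (by omega)]
        omega
  · left
    refine ⟨b - 1, 2, by omega, by omega, ?_, ?_⟩
    · intro m hm
      obtain ⟨i, hi, rfl⟩ := hsurj b m
      rcases (hb i hi).1 hm with rfl | rfl | hh
      · exact ⟨1, by omega, by simp⟩
      · exact ⟨2, by omega, by push_cast; ring⟩
      · exact ⟨0, by omega, by rw [hn1 i hh]; push_cast; ring⟩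
    · intro m hm
      obtain ⟨i, hi, rfl⟩ := hsurj b m
      have : i ≠ 0 := by rintro rfl; exact hv0 hm
      refine ⟨i - 1, by omega, ?_⟩
      rw [Nat.cast_sub (by omega)]; push_cast; ring

theorem core {G : SimpleGraph V} (hTheta : ¬ContainsTheta G) (hPyr : ¬ContainsPyramid G)
    (hEW : ¬ ContainsEvenWheel G) (hSq : ¬ ContainsSquare G) {n : ℕ} {f : ZMod n → V} {u v : V}
    (hf : IsHoleEmb G n f) (hu : u ∉ Set.range f) (hv : v ∉ Set.range f) (huv : u ≠ v)
    (hna : ¬ G.Adj u v)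
    (hU3 : 3 ≤ {m : ZMod n | G.Adj u (f m)}.ncard) (hU : {m : ZMod n | G.Adj u (f m)}.ncard % 2 = 1)
    (hW3 : 3 ≤ {m : ZMod n | G.Adj v (f m)}.ncard) (hW : {m : ZMod n | G.Adj v (f m)}.ncard % 2 = 1)
    (m : ZMod n) (hvm : G.Adj v (f m)) (hum : ¬ G.Adj u (f m)) :
    NestedCfg G n f u v ∨ CousinCfg G n f u v := by
  have h4 := hf.1
  have hn0 : ((n : ℕ) : ZMod n) = 0 := by simp
  obtain ⟨x, hx, hPx⟩ : ∃ x : ℕ, x ≤ n - 1 ∧ G.Adj u (f (m + (x : ZMod n))) := by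
    have : {m : ZMod n | G.Adj u (f m)}.Nonempty := by
      rw [Set.nonempty_iff_ne_empty]
      intro e
      rw [e, Set.ncard_empty] at hU3
      omega
    obtain ⟨y, hy⟩ := this
    obtain ⟨i, hi, rfl⟩ := zrep n h4 m y
    exact ⟨i, by omega, hy⟩
  obtain ⟨a, b, ha, hb, hbn, hPa, hPb, hall⟩ :=
    firstLast (fun i : ℕ => G.Adj u (f (m + (i : ZMod n)))) (n - 1) x hx hPx
  have ha0 : a ≠ 0 := by
    rintro rfl
    apply hum
    simpa using hPa
  have hab : a ≠ b := by
    rintro rfl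
    have : cnt (fun i : ℕ => G.Adj u (f (m + (i : ZMod n)))) n ≤ _ := cnt_le_card {a} (fun j j1 j2 => by
      have := hall j (by omega) j2
      simp; omega)
    rw [cnt_base h4] at this
    simp at this
    omega
  have hsec : ∀ i : ℕ, 0 < i → i < n - b + a → ¬ G.Adj u (f (m + (b : ZMod n) + (i : ZMod n))) := by
    intro i i1 i2 hh
    rw [base_shift] at hh
    rcases Nat.lt_or_ge (b + i) n with h | h
    · have := hall _ (by omega) hh; omega
    · rw [base_wrap _ _ h] at hh
      have := hall _ (by omega) hh; omega
  have hu0 : G.Adj u (f (m + (b : ZMod n) + ((0 : ℕ) : ZMod n))) := by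
    simpa using hPb
  have hud : G.Adj u (f (m + (b : ZMod n) + ((n - b + a : ℕ) : ZMod n))) := by
    rw [base_shift, base_wrap _ _ (by omega), show b + (n - b + a) - n = a by omega]
    exact hPa
  have hvk : G.Adj v (f (m + (b : ZMod n) + ((n - b : ℕ) : ZMod n))) := by
    rw [base_shift, show b + (n - b) = n by omega]
    simpa using hvm
  generalize hk : m + (b : ZMod n) = k at *
  generalize hd : n - b + a = d at *
  by_cases hex : ∃ e : ℕ, d < e ∧ e < n ∧ G.Adj v (f (k + (e : ZMod n)))
  · obtain ⟨e, e1, e2, e3⟩ := hex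
    have H := Cd.mk' (hf.seq k) (u := u) (v := v) (fun i _ e => hu ⟨_, e⟩) (fun i _ e => hv ⟨_, e⟩) huv hna
    rcases lemmaS hTheta hPyr hEW hSq H d (n - b) e (by omega) (by omega) hu0 hud hsec hvk e1 e2 e3
      (by rw [cnt_base h4]; exact hU3) (by rw [cnt_base h4]; exact hU)
      (by rw [cnt_base h4]; exact hW3) (by rw [cnt_base h4]; exact hW) with hc | hc
    · exact lemma1f hTheta hPyr hEW hf hu hv huv hna hW3 hW k hc
    · exact (lemma1f hTheta hPyr hEW hf hv hu huv.symm (fun h => hna h.symm) hU3 hU k hc).imp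
        nested_swap cousin_swap
  · left
    push Not at hex
    refine ⟨k + d, n - d, by omega, by omega, ?_, ?_⟩
    · intro y hy
      obtain ⟨i, hi, rfl⟩ := zrep n h4 k y
      by_cases hi0 : i = 0
      · subst hi0
        refine ⟨n - d, le_rfl, ?_⟩
        rw [base_shift, show d + (n - d) = n by omega]; simp
      · have : d ≤ i := by
          by_contra hc
          exact hsec i (by omega) (by omega) hy
        refine ⟨i - d, by omega, ?_⟩
        rw [base_shift, show d + (i - d) = i by omega]
    · intro y hy
      obtain ⟨i, hi, rfl⟩ := zrep n h4 k y
      have : i ≤ d := by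
        by_contra hc
        exact hex i (by omega) hi hy
      refine ⟨i, by omega, ?_⟩
      rw [base_shift k d, show d + (n - d) = n by omega]; simp


theorem wheel_odd {G : SimpleGraph V} (hEW : ¬ ContainsEvenWheel G) {n : ℕ} {f : ZMod n → V} {u : V}
    (hf : IsHoleEmb G n f) (hu : u ∉ Set.range f)
    (hU3 : 3 ≤ {m : ZMod n | G.Adj u (f m)}.ncard) : {m : ZMod n | G.Adj u (f m)}.ncard % 2 = 1 := by
  by_contra hc
  exact hEW ⟨n, f, u, hf, hu, hU3, by rw [Nat.even_iff]; omega⟩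

theorem sameNbrs {G : SimpleGraph V} (hSq : ¬ ContainsSquare G) {n : ℕ} {f : ZMod n → V} {u v : V}
    (hf : IsHoleEmb G n f) (hu : u ∉ Set.range f) (hv : v ∉ Set.range f) (huv : u ≠ v)
    (hna : ¬ G.Adj u v) (hU3 : 3 ≤ {m : ZMod n | G.Adj u (f m)}.ncard)
    (hall : ∀ m, G.Adj u (f m) → G.Adj v (f m)) : False := by
  have h4 := hf.1
  have H := Cd.mk' (hf.seq 0) (u := u) (v := v) (fun i _ e => hu ⟨_, e⟩) (fun i _ e => hv ⟨_, e⟩) huv hna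
  rw [← cnt_base h4 f u 0, cnt_eq_ncard] at hU3
  obtain ⟨x, hx, y, hy, z, hz, hxy, hxz, hyz⟩ := (Set.two_lt_ncard (cnt_finite _ _)).1 hU3
  have key : ∀ a b : ℕ, a < n → b < n → G.Adj u (f (0 + (a : ZMod n))) → G.Adj u (f (0 + (b : ZMod n))) →
      a ≠ b → (a + 1 = b ∨ b + 1 = a ∨ (a = 0 ∧ b + 1 = n) ∨ (b = 0 ∧ a + 1 = n)) := by
    intro a b ha hb ua ub hab
    by_contra hc
    have va := hall _ ua
    have vb := hall _ ub
    refine hSq (H.square a n b (n + 1) (by omega) (by omega) (by omega) (by omega) hab (by omega)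
      (Or.inr (Or.inr (Or.inl ⟨rfl, ha, ua⟩))) (Or.inr (Or.inl ⟨rfl, hb, ub⟩))
      (Or.inr (Or.inr (Or.inr (Or.inr ⟨rfl, hb, vb⟩)))) (Or.inr (Or.inr (Or.inr (Or.inl ⟨rfl, ha, va⟩)))) ?_ ?_)
    · unfold EE; omega
    · unfold EE; omega
  have k1 := key x y hx.1 hy.1 hx.2 hy.2 hxy
  have k2 := key x z hx.1 hz.1 hx.2 hz.2 hxz
  have k3 := key y z hy.1 hz.1 hy.2 hz.2 hyz
  have := hx.1
  have := hy.1
  have := hz.1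
  omega

theorem noButterfly {G : SimpleGraph V} (hEW : ¬ ContainsEvenWheel G) : ¬ ContainsButterfly G := by
  rintro ⟨n, f, u, hf, hu, i, j, h1, h2, h3, h4, -, -, hN⟩
  have h4n := hf.1
  have hne : Nontrivial (ZMod n) := by
    have : Fact (1 < n) := ⟨by omega⟩
    infer_instance
  have hs : {m : ZMod n | G.Adj u (f m)} = (({i, i + 1, j, j + 1} : Finset (ZMod n)) : Set (ZMod n)) := by
    ext m
    simp [hN]
  have hc : {m : ZMod n | G.Adj u (f m)}.ncard = 4 := by
    rw [hs, Set.ncard_coe_finset]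
    rw [Finset.card_insert_of_notMem (by simp [h1, h2]), Finset.card_insert_of_notMem (by simp [h3]; simpa using h4),
      Finset.card_insert_of_notMem (by simp), Finset.card_singleton]
  exact hEW ⟨n, f, u, hf, hu, by rw [hc]; norm_num, by rw [hc]; decide⟩

/-- Every (theta, prism, pyramid, even wheel, square)-free graph belongs
to the class 𝒞. -/
theorem statement8 (G : SimpleGraph V)
    (hTheta : ¬ContainsTheta G) (hPrism : ¬ContainsPrism G) (hPyr : ¬ContainsPyramid G)
    (hEW : ¬ContainsEvenWheel G) (hSq : ¬ContainsSquare G) :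
    InClassC G := by
  refine ⟨hTheta, hPrism, hPyr, noButterfly hEW, ?_⟩
  rintro n f u v ⟨hf, huv, hu, hv, hU3, hW3⟩ hna
  have hU := wheel_odd hEW hf hu hU3
  have hW := wheel_odd hEW hf hv hW3
  by_cases h1 : ∃ m, G.Adj v (f m) ∧ ¬ G.Adj u (f m)
  · obtain ⟨m, m1, m2⟩ := h1
    exact core hTheta hPyr hEW hSq hf hu hv huv hna hU3 hU hW3 hW m m1 m2
  by_cases h2 : ∃ m, G.Adj u (f m) ∧ ¬ G.Adj v (f m)
  · obtain ⟨m, m1, m2⟩ := h2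
    exact (core hTheta hPyr hEW hSq hf hv hu huv.symm (fun h => hna h.symm) hW3 hW hU3 hU m m1 m2).imp
      nested_swap cousin_swap
  push Not at h1 h2
  exact (sameNbrs hSq hf hu hv huv hna hU3 h2).elim
end
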